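/- Let G = ⟨a, b; Rⁿ⟩ be a two-generator one-relator group with torsion (so n > 1 and R is not a proper power in the free group on {a, b}). Then the cyclic subgroups ⟨a⟩ and ⟨b⟩ generated by the images of the two generators are malnormal subgroups of G. -/

import Mathlib

/-- A group is *virtually-ℤ* if it has a finite-index subgroup isomorphic to `ℤ`. -/
def VirtuallyZ (G : Type*) [Group G] : Prop :=
  ∃ H : Subgroup G, H.FiniteIndex ∧ Nonempty (H ≃* Multiplicative ℤ)

/-- A subgroup `M` of `G` is *malnormal* if `g M g⁻¹ ∩ M ≠ 1` implies `g ∈ M`. -/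
def Subgroup.IsMalnormal {G : Type*} [Group G] (M : Subgroup G) : Prop :=
  ∀ g : G, (∃ x : G, x ≠ 1 ∧ x ∈ M ∧ g * x * g⁻¹ ∈ M) → g ∈ M

/-- A group is a *free product of cyclic groups* if it is isomorphic to the free product
(`Monoid.CoprodI`) of a family of cyclic groups; every cyclic group is isomorphic to
`Multiplicative (ZMod m)` for some `m : ℕ` (with `m = 0` giving the infinite cyclic group). -/
def IsFreeProductOfCyclics (G : Type*) [Group G] : Prop :=
  ∃ (ι : Type) (m : ι → ℕ),
    Nonempty (G ≃* Monoid.CoprodI fun i => Multiplicative (ZMod (m i)))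

/-- A group is *freely decomposable* if it is isomorphic to a free product of two
nontrivial groups. -/
def FreelyDecomposable (G : Type*) [Group G] : Prop :=
  ∃ (H K : Type) (gH : Group H) (gK : Group K),
    Nontrivial H ∧ Nontrivial K ∧
      Nonempty (G ≃* (letI := gH; letI := gK; Monoid.Coprod H K))

/-- A group is *freely indecomposable* if it is not isomorphic to a free product of two
nontrivial groups. -/
def FreelyIndecomposable (G : Type*) [Group G] : Prop := ¬ FreelyDecomposable G

section Part1
open HNNExtension HNNExtension.NormalWord

namespace OneRel

section HNN
variable {H : Type*} [Group H] {A B : Subgroup H} {φ : A ≃* B}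

/-- product of a list of syllables -/
def lprod (φ : A ≃* B) (l : List (ℤˣ × H)) : HNNExtension H A B φ :=
  (l.map (fun x => t ^ (x.1 : ℤ) * of x.2)).prod

abbrev RedChain (A B : Subgroup H) (l : List (ℤˣ × H)) : Prop :=
  l.IsChain (fun a b => a.2 ∈ toSubgroup A B a.1 → a.1 = b.1)

@[simp] lemma lprod_nil : lprod φ [] = 1 := rfl
@[simp] lemma lprod_cons (x : ℤˣ × H) (l) :
    lprod φ (x :: l) = t ^ (x.1 : ℤ) * of x.2 * lprod φ l := by simp [lprod]
@[simp] lemma lprod_append (l l' : List (ℤˣ × H)) :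
    lprod φ (l ++ l') = lprod φ l * lprod φ l' := by simp [lprod]
lemma lprod_replicate (s : ℤˣ) (m : ℕ) :
    lprod φ (List.replicate m (s, (1 : H))) = t ^ ((s : ℤ) * m) := by
  simp [lprod, zpow_mul]

lemma exists_reduced (g : HNNExtension H A B φ) :
    ∃ h l, RedChain A B l ∧ g = of h * lprod φ l := by
  obtain ⟨d⟩ := TransversalPair.nonempty H A B
  refine ⟨(g • (NormalWord.empty : NormalWord d)).head,
    (g • (NormalWord.empty : NormalWord d)).toList,
    (g • (NormalWord.empty : NormalWord d)).chain, ?_⟩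
  have := prod_smul φ g (NormalWord.empty : NormalWord d)
  rw [prod_empty, mul_one] at this
  exact this.symm

lemma reduced_eq {h h' : H} {l l' : List (ℤˣ × H)} (hl : RedChain A B l) (hl' : RedChain A B l')
    (he : of h * lprod φ l = of h' * lprod φ l') :
    l.map Prod.fst = l'.map Prod.fst ∧
      ∀ u ∈ l.head?.map Prod.fst, h⁻¹ * h' ∈ toSubgroup A B (-u) :=
  ReducedWord.map_fst_eq_and_of_prod_eq φ (w₁ := ⟨h, l, hl⟩) (w₂ := ⟨h', l', hl'⟩) he

lemma redChain_const {l : List (ℤˣ × H)} {s : ℤˣ} (h : ∀ x ∈ l, x.1 = s) : RedChain A B l := by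
  induction l with
  | nil => exact List.isChain_nil
  | cons a l ih =>
    rw [RedChain, List.isChain_cons]
    refine ⟨fun y hy _ => ?_, ih fun x hx => h x (by simp [hx])⟩
    rw [h a (by simp), h y (by simp [List.mem_of_mem_head? hy])]

lemma mem_units (s : ℤˣ) : s = 1 ∨ s = -1 := Int.units_eq_one_or s

lemma shift_left (e : ℤˣ) {h : H} (hh : h ∈ toSubgroup A B (-e)) :
    ∃ a : H, (of h : HNNExtension H A B φ) * t ^ (e : ℤ) = t ^ (e : ℤ) * of a := by
  rcases mem_units e with rfl | rfl
  · exact ⟨_, by simpa using of_mul_t (φ := φ) ⟨h, hh⟩⟩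
  · exact ⟨_, by simpa using of_mul_inv_t (φ := φ) ⟨h, hh⟩⟩

variable {C : Subgroup H}

/-- `C` is normalized by the stable letter. -/
structure TInv (φ : A ≃* B) (C : Subgroup H) : Prop where
  hA : C ≤ A
  hB : C ≤ B
  inv : ∀ a : A, (a : H) ∈ C ↔ (φ a : H) ∈ C

lemma TInv.le (hC : TInv φ C) (e : ℤˣ) : C ≤ toSubgroup A B e := by
  rcases mem_units e with rfl | rfl
  · exact hC.hA
  · exact hC.hB

lemma TInv.t_mul (hC : TInv φ C) {c : H} (hc : c ∈ C) :
    ∃ c' ∈ C, (t : HNNExtension H A B φ) * of c = of c' * t :=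
  ⟨φ ⟨c, hC.hA hc⟩, (hC.inv _).1 hc, t_mul_of (φ := φ) ⟨c, hC.hA hc⟩⟩

lemma TInv.inv_t_mul (hC : TInv φ C) {c : H} (hc : c ∈ C) :
    ∃ c' ∈ C, (t : HNNExtension H A B φ)⁻¹ * of c = of c' * t⁻¹ :=
  ⟨φ.symm ⟨c, hC.hB hc⟩, (hC.inv _).2 (by simpa using hc), inv_t_mul_of (φ := φ) ⟨c, hC.hB hc⟩⟩

lemma TInv.zpow_mul (hC : TInv φ C) (k : ℤ) : ∀ {c : H}, c ∈ C →
    ∃ c' ∈ C, (t : HNNExtension H A B φ) ^ k * of c = of c' * t ^ k := by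
  induction k using Int.induction_on with
  | zero => intro c hc; exact ⟨c, hc, by simp⟩
  | succ i ih =>
    intro c hc
    obtain ⟨c1, h1, e1⟩ := hC.t_mul hc
    obtain ⟨c2, h2, e2⟩ := ih h1
    refine ⟨c2, h2, ?_⟩
    rw [zpow_add_one, mul_assoc, e1, ← mul_assoc, e2, mul_assoc]
  | pred i ih =>
    intro c hc
    obtain ⟨c1, h1, e1⟩ := hC.inv_t_mul hc
    obtain ⟨c2, h2, e2⟩ := ih h1
    refine ⟨c2, h2, ?_⟩
    rw [zpow_sub_one, mul_assoc, e1, ← mul_assoc, e2, mul_assoc]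

/-- `C ⋊ ⟨t⟩`. -/
def LSub (hC : TInv φ C) : Subgroup (HNNExtension H A B φ) where
  carrier := {g | ∃ c ∈ C, ∃ k : ℤ, g = of c * t ^ k}
  one_mem' := ⟨1, C.one_mem, 0, by simp⟩
  mul_mem' := by
    rintro _ _ ⟨c, hc, k, rfl⟩ ⟨c', hc', k', rfl⟩
    obtain ⟨d, hd, e⟩ := hC.zpow_mul k hc'
    refine ⟨c * d, C.mul_mem hc hd, k + k', ?_⟩
    rw [mul_assoc, ← mul_assoc (t ^ k), e, map_mul, zpow_add]; simp only [mul_assoc]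
  inv_mem' := by
    rintro _ ⟨c, hc, k, rfl⟩
    obtain ⟨d, hd, e⟩ := hC.zpow_mul (-k) (C.inv_mem hc)
    exact ⟨d, hd, -k, by rw [← e]; simp⟩

lemma t_mem_LSub (hC : TInv φ C) : t ∈ LSub hC := ⟨1, C.one_mem, 1, by simp⟩
lemma of_mem_LSub (hC : TInv φ C) {c : H} (hc : c ∈ C) : of c ∈ LSub hC :=
  ⟨c, hc, 0, by simp⟩

/-- total exponent of the stable letter -/
def deg (φ : A ≃* B) : HNNExtension H A B φ →* Multiplicative ℤ :=
  lift 1 (Multiplicative.ofAdd 1) (by simp)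

lemma deg_of_mul (c : H) (k : ℤ) : deg φ (of c * t ^ k) = Multiplicative.ofAdd k := by
  simp [deg, ← ofAdd_zsmul]

lemma exists_sign (k : ℤ) (hk : k ≠ 0) : ∃ (s : ℤˣ) (m : ℕ), k = (s : ℤ) * ((m + 1 : ℕ) : ℤ) := by
  rcases lt_or_gt_of_ne hk with h | h
  · exact ⟨-1, (-k).toNat - 1, by push_cast; simp; omega⟩
  · exact ⟨1, k.toNat - 1, by push_cast; simp; omega⟩

lemma base_step (hC : TInv φ C) (s : ℤˣ) (m : ℕ) {h c c' : H} (hc : c ∈ C) (hc' : c' ∈ C)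
    (he : (of h : HNNExtension H A B φ) * (of c * t ^ ((s : ℤ) * ((m + 1 : ℕ) : ℤ))) =
      of c' * t ^ ((s : ℤ) * ((m + 1 : ℕ) : ℤ)) * of h) : h ∈ toSubgroup A B (-s) := by
  have key := reduced_eq (φ := φ) (h := h * c) (h' := c')
    (l := List.replicate (m + 1) (s, 1)) (l' := List.replicate m (s, 1) ++ [(s, h)])
    (redChain_const (s := s) (by simp)) (redChain_const (s := s) (by
      intro x hx; simp at hx; rcases hx with hx | rfl
      · rw [hx.2]
      · rfl)) (by
      rw [lprod_append, lprod_replicate, lprod_replicate, map_mul]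
      simp only [lprod_cons, lprod_nil, mul_one]
      rw [mul_assoc, he, ← mul_assoc (t ^ _) (t ^ _), ← zpow_add]
      push_cast
      rw [mul_add, mul_one, mul_assoc])
  have h2 := key.2 s (by simp [List.replicate_succ])
  have h3 := (toSubgroup A B (-s)).mul_mem (hC.le (-s) hc)
    ((toSubgroup A B (-s)).mul_mem h2 ((toSubgroup A B (-s)).inv_mem (hC.le (-s) hc')))
  have : c * ((h * c)⁻¹ * c' * c'⁻¹) = h⁻¹ := by group
  rw [this] at h3
  simpa using h3

lemma inv_form (hC : TInv φ C) {c c' : H} (hc : c ∈ C) (hc' : c' ∈ C) (k : ℤ)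
    {g : HNNExtension H A B φ} (he : g * (of c * t ^ k) = of c' * t ^ k * g) :
    ∃ d ∈ C, ∃ d' ∈ C, g * (of d * t ^ (-k)) = of d' * t ^ (-k) * g := by
  obtain ⟨d, hd, e⟩ := hC.zpow_mul (-k) (C.inv_mem hc)
  obtain ⟨d', hd', e'⟩ := hC.zpow_mul (-k) (C.inv_mem hc')
  refine ⟨d, hd, d', hd', ?_⟩
  rw [← e, ← e']
  have h1 : (t : HNNExtension H A B φ) ^ (-k) * of c⁻¹ = (of c * t ^ k)⁻¹ := by simp
  have h2 : (t : HNNExtension H A B φ) ^ (-k) * of c'⁻¹ = (of c' * t ^ k)⁻¹ := by simp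
  rw [h1, h2, mul_inv_eq_iff_eq_mul, mul_assoc, eq_inv_mul_iff_mul_eq, he]

lemma base_both (hC : TInv φ C) (k : ℤ) (hk : k ≠ 0) {h c c' : H} (hc : c ∈ C) (hc' : c' ∈ C)
    (he : (of h : HNNExtension H A B φ) * (of c * t ^ k) = of c' * t ^ k * of h) :
    h ∈ A ∧ h ∈ B := by
  obtain ⟨s, m, rfl⟩ := exists_sign k hk
  have h1 := base_step hC s m hc hc' he
  obtain ⟨d, hd, d', hd', he'⟩ := inv_form hC hc hc' _ he
  have h2 := base_step hC (-s) m hd hd' (by simpa using he')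
  rcases mem_units s with rfl | rfl
  · exact ⟨by simpa using h2, by simpa using h1⟩
  · exact ⟨by simpa using h1, by simpa using h2⟩

lemma head_mem_hyp (hC : TInv φ C) (s : ℤˣ) (m : ℕ) {h0 h c c' : H} {e : ℤˣ} {h1 : H}
    {l' l0 : List (ℤˣ × H)} (hch : RedChain A B ((e, h1) :: l'))
    (hl : (e, h1) :: l' = l0 ++ [(s, h)]) (hc' : c' ∈ C)
    (he : (of h0 * lprod φ ((e, h1) :: l')) * (of c * t ^ ((s : ℤ) * ((m + 1 : ℕ) : ℤ))) =
      of c' * t ^ ((s : ℤ) * ((m + 1 : ℕ) : ℤ)) * (of h0 * lprod φ ((e, h1) :: l'))) :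
    h0 ∈ toSubgroup A B (-e) := by
  by_contra hn
  have hch0 := hch
  rw [hl, RedChain, List.isChain_append] at hch0
  have c1 : RedChain A B (l0 ++ (s, h * c) :: List.replicate (m + 1) (s, 1)) := by
    rw [RedChain, List.isChain_append]
    refine ⟨hch0.1, redChain_const (s := s) (by simp), ?_⟩
    intro x hx y hy
    have := hch0.2.2 x hx (s, h) (by simp)
    simp at hy; subst hy; exact this
  have c2 : RedChain A B (List.replicate m (s, 1) ++ (s, h0) :: (e, h1) :: l') := by
    rw [RedChain, List.isChain_append]
    refine ⟨redChain_const (s := s) (by simp), ?_, ?_⟩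
    · rw [List.isChain_cons]
      refine ⟨?_, hch⟩
      intro y hy hh
      simp at hy; subst hy
      simp only at hh ⊢
      by_contra hse
      have : s = -e := by
        rcases mem_units s with rfl | rfl <;> rcases mem_units e with rfl | rfl <;> simp_all
      exact hn (this ▸ hh)
    · intro x hx y hy _
      simp at hy; subst hy
      have := List.mem_of_mem_getLast? hx
      simp at this; rw [this.2]
  have key := reduced_eq (φ := φ) (h := h0) (h' := c') c1 c2 (by
    have e1 : lprod φ (l0 ++ (s, h * c) :: List.replicate (m + 1) (s, 1)) =
      lprod φ ((e, h1) :: l') * (of c * t ^ ((s : ℤ) * ((m + 1 : ℕ) : ℤ))) := by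
      rw [hl]; simp only [lprod_append, lprod_cons, lprod_replicate, lprod_nil, map_mul, mul_one,
        mul_assoc]
    rw [e1, ← mul_assoc, he, lprod_append, lprod_replicate, lprod_cons (s, h0)]
    simp only [mul_assoc]
    rw [← mul_assoc (t ^ _) (t ^ _), ← zpow_add]
    push_cast
    rw [mul_add, mul_one])
  have h2 := key.2 e (by
    cases l0 with
    | nil => simp at hl ⊢; exact hl.1.1.symm
    | cons a l0 => simp at hl ⊢; rw [← hl.1])
  apply hn
  have h3 := (toSubgroup A B (-e)).mul_mem h2 ((toSubgroup A B (-e)).inv_mem (hC.le (-e) hc'))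
  simpa using h3

lemma head_mem_ell {h0 h c c' : H} {e : ℤˣ} {h1 : H} {s : ℤˣ}
    {l' l0 : List (ℤˣ × H)} (hch : RedChain A B ((e, h1) :: l'))
    (hl : (e, h1) :: l' = l0 ++ [(s, h)])
    (he : (of h0 * lprod φ ((e, h1) :: l')) * of c = of c' * (of h0 * lprod φ ((e, h1) :: l'))) :
    h0⁻¹ * c' * h0 ∈ toSubgroup A B (-e) := by
  have hch0 := hch
  rw [hl, RedChain, List.isChain_append] at hch0
  have c1 : RedChain A B (l0 ++ [(s, h * c)]) := by
    rw [RedChain, List.isChain_append]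
    refine ⟨hch0.1, by simp, ?_⟩
    intro x hx y hy
    have := hch0.2.2 x hx (s, h) (by simp)
    simp at hy; subst hy; exact this
  have key := reduced_eq (φ := φ) (h := h0) (h' := c' * h0) c1 hch (by
    have e1 : lprod φ (l0 ++ [(s, h * c)]) = lprod φ ((e, h1) :: l') * of c := by
      rw [hl]; simp only [lprod_append, lprod_cons, lprod_nil, map_mul, mul_one, mul_assoc]
    rw [e1, ← mul_assoc, he, map_mul, mul_assoc])
  have h2 := key.2 e (by
    cases l0 with
    | nil => simp at hl ⊢; exact hl.1.1.symm
    | cons a l0 => simp at hl ⊢; rw [← hl.1])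
  simpa [mul_assoc] using h2

theorem hnn_malnormal (hC : TInv φ C) (hmA : A.IsMalnormal) (hmB : B.IsMalnormal)
    (hmC : C.IsMalnormal)
    (hstar : ∀ K : Set H, (∀ h ∈ K, ∃ ha : h ∈ A, h ∈ B ∧ (φ ⟨h, ha⟩ : H) ∈ K) → K ⊆ C) :
    (LSub hC).IsMalnormal := by
  suffices key : ∀ (N : ℕ) (h0 : H) (l : List (ℤˣ × H)), l.length = N → RedChain A B l →
      ∀ u ∈ LSub hC, u ≠ 1 → ∀ v ∈ LSub hC,
      (of h0 * lprod φ l) * u = v * (of h0 * lprod φ l) → of h0 * lprod φ l ∈ LSub hC by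
    rintro g ⟨u, hu1, hu, hv⟩
    obtain ⟨h0, l, hl, rfl⟩ := exists_reduced g
    exact key _ h0 l rfl hl u hu hu1 _ hv (by group)
  intro N
  induction N with
  | zero =>
    intro h0 l hl _ u hu hu1 v hv he
    obtain rfl : l = [] := List.length_eq_zero_iff.1 hl
    simp only [lprod_nil, mul_one] at he ⊢
    apply of_mem_LSub
    obtain ⟨c, hc, k, rfl⟩ := hu
    obtain ⟨c', hc', k', rfl⟩ := hv
    obtain rfl : k = k' := by
      have := congrArg (deg φ) he
      rw [map_mul, map_mul (deg φ) _ (of h0), deg_of_mul, deg_of_mul, mul_comm] at this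
      simpa using this
    by_cases hk : k = 0
    · subst hk
      simp only [zpow_zero, mul_one, ← map_mul] at he hu1
      have he := of_injective φ he
      refine hmC h0 ⟨c, ?_, hc, ?_⟩
      · rintro rfl; simp at hu1
      · rw [he]; simpa using hc'
    · apply hstar {h | ∃ c ∈ C, ∃ c' ∈ C, (of h : HNNExtension H A B φ) * (of c * t ^ k) =
        of c' * t ^ k * of h} _ ⟨c, hc, c', hc', he⟩
      rintro h ⟨c, hc, c', hc', he⟩
      obtain ⟨ha, hb⟩ := base_both hC k hk hc hc' he
      refine ⟨ha, hb, ?_⟩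
      obtain ⟨d, hd, e⟩ := hC.t_mul hc
      obtain ⟨d', hd', e'⟩ := hC.t_mul hc'
      refine ⟨d, hd, d', hd', ?_⟩
      rw [equiv_eq_conj (φ := φ) ⟨h, ha⟩, eq_mul_inv_of_mul_eq e.symm, eq_mul_inv_of_mul_eq e'.symm]
      have hz : (t : HNNExtension H A B φ)⁻¹ * t ^ k = t ^ k * t⁻¹ := by
        rw [← zpow_neg_one, ← zpow_add, ← zpow_add, add_comm]
      calc _ = t * (of h * (of c * (t⁻¹ * t ^ k))) := by simp [mul_assoc]
        _ = t * (of h * (of c * t ^ k)) * t⁻¹ := by rw [hz]; simp [mul_assoc]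
        _ = t * (of c' * (t ^ k * of h)) * t⁻¹ := by rw [he]; simp [mul_assoc]
        _ = t * of c' * (t⁻¹ * t ^ k) * t * of h * t⁻¹ := by rw [hz]; simp [mul_assoc]
        _ = _ := by simp [mul_assoc]
  | succ N ih =>
    intro h0 l hl hch u hu hu1 v hv he
    obtain ⟨⟨e, h1⟩, l', rfl⟩ : ∃ x l', l = x :: l' := by
      cases l with
      | nil => simp at hl
      | cons x l' => exact ⟨x, l', rfl⟩
    obtain ⟨l0, ⟨s, h⟩, hlast⟩ : ∃ l0 y, (e, h1) :: l' = l0 ++ [y] :=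
      ⟨_, _, (List.dropLast_append_getLast (List.cons_ne_nil (e, h1) l')).symm⟩
    have hh0 : h0 ∈ toSubgroup A B (-e) := by
      obtain ⟨c, hc, k, rfl⟩ := hu
      obtain ⟨c', hc', k', rfl⟩ := hv
      obtain rfl : k = k' := by
        have := congrArg (deg φ) he
        rw [map_mul, map_mul (deg φ) _ (of h0 * _), deg_of_mul, deg_of_mul, mul_comm] at this
        simpa using this
      by_cases hk : k = 0
      · subst hk
        simp only [zpow_zero, mul_one] at he hu1
        have hm := head_mem_ell hch hlast he
        have hmal : (toSubgroup A B (-e)).IsMalnormal := by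
          rcases mem_units e with rfl | rfl
          · exact hmB
          · simpa using hmA
        have := hmal h0⁻¹ ⟨c', ?_, hC.le _ hc', by simpa using hm⟩
        · simpa using this
        · rintro rfl
          simp at he
          exact hu1 (by rw [he])
      · obtain ⟨s', m, rfl⟩ := exists_sign k hk
        by_cases hs : s' = s
        · subst hs
          exact head_mem_hyp hC s' m hch hlast hc' he
        · obtain ⟨d, hd, d', hd', he'⟩ := inv_form hC hc hc' _ he
          have hs' : -s' = s := by
            rcases mem_units s with rfl | rfl <;> rcases mem_units s' with rfl | rfl <;> simp_all
          refine head_mem_hyp hC s m hch hlast hd' ?_ (c := d)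
          rw [← hs']; simpa using he'
    obtain ⟨a, ha⟩ := shift_left (φ := φ) e hh0
    have hg : of h0 * lprod φ ((e, h1) :: l') = t ^ (e : ℤ) * (of (a * h1) * lprod φ l') := by
      rw [lprod_cons, map_mul, ← mul_assoc, ← mul_assoc, ha]; simp only [mul_assoc]
    have htm : (t : HNNExtension H A B φ) ^ (e : ℤ) ∈ LSub hC :=
      (LSub hC).zpow_mem (t_mem_LSub hC) _
    rw [hg]
    refine (LSub hC).mul_mem htm (ih _ l' (by simpa using hl) (List.isChain_cons.1 hch).2 u hu hu1
      ((t ^ (e : ℤ))⁻¹ * v * t ^ (e : ℤ))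
      ((LSub hC).mul_mem ((LSub hC).mul_mem ((LSub hC).inv_mem htm) hv) htm) ?_)
    rw [hg] at he
    rw [mul_assoc (_ * v), mul_assoc _ v, ← he]; simp [mul_assoc]

/-- If `D` is compatible with the associated subgroups, then `⟨D, t⟩ ∩ H = D`. -/
theorem hnn_inter (D : Subgroup H) (hD : ∀ a : A, (a : H) ∈ D ↔ (φ a : H) ∈ D) {h : H}
    (hh : (of h : HNNExtension H A B φ) ∈ Subgroup.closure ((of '' (D : Set H)) ∪ {t})) :
    h ∈ D := by
  let P : HNNExtension H A B φ → Prop := fun g => ∃ h0 l, RedChain A B l ∧ h0 ∈ D ∧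
    (∀ x ∈ l, x.2 ∈ D) ∧ g = of h0 * lprod φ l
  have hof : ∀ d ∈ D, ∀ g, P g → P (of d * g) := by
    rintro d hd _ ⟨h0, l, hl, hh0, hlD, rfl⟩
    exact ⟨d * h0, l, hl, D.mul_mem hd hh0, hlD, by rw [map_mul, mul_assoc]⟩
  have ht : ∀ (e : ℤˣ) g, P g → P (t ^ (e : ℤ) * g) := by
    rintro e _ ⟨h0, l, hl, hh0, hlD, rfl⟩
    by_cases hc : RedChain A B ((e, h0) :: l)
    · refine ⟨1, (e, h0) :: l, hc, D.one_mem, ?_, by simp [mul_assoc]⟩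
      intro x hx
      rcases List.mem_cons.1 hx with rfl | hx
      · exact hh0
      · exact hlD x hx
    · rw [RedChain, List.isChain_cons] at hc
      have : ∃ y ∈ l.head?, h0 ∈ toSubgroup A B e ∧ e ≠ y.1 := by
        by_contra hcon
        push Not at hcon
        exact hc ⟨fun y hy h => hcon y hy h, hl⟩
      obtain ⟨y, hy, hm, hne⟩ := this
      obtain ⟨l', rfl⟩ : ∃ l', l = y :: l' := by
        cases l with
        | nil => simp at hy
        | cons z l' => simp at hy; exact ⟨l', by rw [hy]⟩
      obtain ⟨f, g1⟩ := y
      have hf : f = -e := by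
        rcases mem_units f with rfl | rfl <;> rcases mem_units e with rfl | rfl <;> simp_all
      subst hf
      have hcon : ∃ d ∈ D, (t : HNNExtension H A B φ) ^ (e : ℤ) * of h0 = of d * t ^ (e : ℤ) := by
        rcases mem_units e with rfl | rfl
        · exact ⟨_, (hD ⟨h0, hm⟩).1 hh0, by simpa using t_mul_of (φ := φ) ⟨h0, hm⟩⟩
        · exact ⟨φ.symm ⟨h0, hm⟩, (hD _).2 (by simpa using hh0),
            by simpa using inv_t_mul_of (φ := φ) ⟨h0, hm⟩⟩
      obtain ⟨d, hd, hdt⟩ := hcon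
      refine ⟨d * g1, l', (List.isChain_cons.1 hl).2, D.mul_mem hd (hlD (-e, g1) (by simp)),
        fun x hx => hlD x (by simp [hx]), ?_⟩
      rw [lprod_cons, ← mul_assoc, ← mul_assoc, ← mul_assoc, hdt]
      simp [mul_assoc]
  have hall : ∀ g ∈ Subgroup.closure ((of '' (D : Set H)) ∪ {(t : HNNExtension H A B φ)}), P g := by
    intro g hg
    induction hg using Subgroup.closure_induction_left with
    | one => exact ⟨1, [], List.isChain_nil, D.one_mem, by simp, by simp⟩
    | mul_left x hx y _ hy =>
      rcases hx with ⟨d, hd, rfl⟩ | rfl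
      · exact hof d hd _ hy
      · simpa using ht 1 _ hy
    | inv_mul_cancel x hx y _ hy =>
      rcases hx with ⟨d, hd, rfl⟩ | rfl
      · rw [← map_inv]; exact hof _ (D.inv_mem hd) _ hy
      · simpa using ht (-1) _ hy
  obtain ⟨h0, l, hl, hh0, -, he⟩ := hall _ hh
  have hl0 : l = [] := by
    have := (reduced_eq (φ := φ) (h := h) (l := []) List.isChain_nil hl (by simpa using he)).1
    simpa using this.symm
  subst hl0
  rw [lprod_nil, mul_one] at he
  rwa [of_injective φ he]

end HNN
end OneRel
end Part1

section Part2
open Monoid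

namespace OneRel

lemma malnormal_comap {G E : Type*} [Group G] [Group E] (f : G →* E) (hf : Function.Injective f)
    {M : Subgroup E} (hM : M.IsMalnormal) : (M.comap f).IsMalnormal := by
  rintro g ⟨x, hx1, hx, hg⟩
  refine hM (f g) ⟨f x, ?_, hx, by simpa using hg⟩
  rwa [Ne, map_eq_one_iff f hf]

section Coprod
variable {ι : Type*} {G : ι → Type*} [∀ i, Group (G i)]

/-- reduced syllable lists -/
def CGood (l : List (Σ i, G i)) : Prop :=
  (∀ p ∈ l, p.2 ≠ 1) ∧ l.IsChain (fun a b => a.1 ≠ b.1)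

/-- product of a syllable list -/
def cprod (l : List (Σ i, G i)) : CoprodI G := (l.map fun p => CoprodI.of p.2).prod

@[simp] lemma cprod_nil : cprod ([] : List (Σ i, G i)) = 1 := rfl
@[simp] lemma cprod_cons (p) (l : List (Σ i, G i)) : cprod (p :: l) = CoprodI.of p.2 * cprod l := by
  simp [cprod]
@[simp] lemma cprod_append (l l' : List (Σ i, G i)) : cprod (l ++ l') = cprod l * cprod l' := by
  simp [cprod]

lemma cgood_inj {l l' : List (Σ i, G i)} (h : CGood l) (h' : CGood l') (he : cprod l = cprod l') :
    l = l' := by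
  classical
  have : (⟨l, fun p hp => h.1 p hp, h.2⟩ : CoprodI.Word G).prod
      = (⟨l', fun p hp => h'.1 p hp, h'.2⟩ : CoprodI.Word G).prod := he
  have h2 := CoprodI.Word.equiv.symm.injective this
  exact congrArg CoprodI.Word.toList h2

lemma exists_cgood (g : CoprodI G) : ∃ l, CGood l ∧ cprod l = g := by
  classical
  obtain ⟨w, rfl⟩ := CoprodI.Word.equiv.symm.surjective g
  exact ⟨w.toList, ⟨fun p hp => w.ne_one p hp, w.chain_ne⟩, rfl⟩

/-- subgroup generated by the factors in `J` -/
def csub (J : Set ι) : Subgroup (CoprodI G) :=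
  Subgroup.closure {g | ∃ i ∈ J, ∃ a : G i, CoprodI.of a = g}

lemma of_mem_csub {J : Set ι} {i : ι} (hi : i ∈ J) (a : G i) : CoprodI.of a ∈ csub (G := G) J :=
  Subgroup.subset_closure ⟨i, hi, a, rfl⟩

lemma cprod_mem {J : Set ι} {l : List (Σ i, G i)} (h : ∀ p ∈ l, p.1 ∈ J) : cprod l ∈ csub J := by
  induction l with
  | nil => simp [one_mem]
  | cons p l ih =>
    rw [cprod_cons]
    exact mul_mem (of_mem_csub (h p (by simp)) _) (ih fun q hq => h q (by simp [hq]))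

lemma exists_cgood_of_mem {J : Set ι} {g : CoprodI G} (hg : g ∈ csub J) :
    ∃ l, CGood l ∧ cprod l = g ∧ ∀ p ∈ l, p.1 ∈ J := by
  have hr : csub J ≤ (CoprodI.lift (fun j : J => (CoprodI.of : G j →* CoprodI G))).range := by
    rw [csub, Subgroup.closure_le]
    rintro _ ⟨i, hi, a, rfl⟩
    exact ⟨CoprodI.of (i := (⟨i, hi⟩ : J)) a, by simp⟩
  obtain ⟨c, rfl⟩ := hr hg
  obtain ⟨l, hl, rfl⟩ := exists_cgood c
  refine ⟨l.map fun p => ⟨p.1, p.2⟩, ⟨?_, ?_⟩, ?_, ?_⟩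
  · intro p hp
    obtain ⟨q, hq, rfl⟩ := List.mem_map.1 hp
    exact hl.1 q hq
  · rw [List.isChain_map]
    refine hl.2.imp fun a b hab h => hab (Subtype.ext h)
  · simp only [cprod, map_list_prod, List.map_map]
    congr 1
  · intro p hp
    obtain ⟨q, hq, rfl⟩ := List.mem_map.1 hp
    exact q.1.2

theorem csub_malnormal (J : Set ι) : (csub (G := G) J).IsMalnormal := by
  suffices key : ∀ (N : ℕ) (l : List (Σ i, G i)), l.length = N → CGood l → ∀ x ∈ csub (G := G) J,
      x ≠ 1 → ∀ y ∈ csub (G := G) J, cprod l * x = y * cprod l → cprod l ∈ csub (G := G) J by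
    rintro g ⟨x, hx1, hx, hg⟩
    obtain ⟨l, hl, rfl⟩ := exists_cgood g
    exact key _ l rfl hl x hx hx1 _ hg (by group)
  intro N
  induction N with
  | zero =>
    intro l hl _ x _ _ y _ _
    obtain rfl : l = [] := List.length_eq_zero_iff.1 hl
    simp [one_mem]
  | succ N ih =>
    intro l hl hg x hx hx1 y hy he
    obtain ⟨p, l1, rfl⟩ := List.exists_cons_of_ne_nil (List.ne_nil_of_length_eq_add_one hl)
    by_cases hp : p.1 ∈ J
    · have hp' := of_mem_csub (G := G) hp p.2
      rw [cprod_cons] at he ⊢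
      refine mul_mem hp' (ih l1 (by simpa using hl) ⟨fun q hq => hg.1 q (by simp [hq]), hg.2.tail⟩
        x hx hx1 ((CoprodI.of p.2)⁻¹ * y * CoprodI.of p.2) (mul_mem (mul_mem (inv_mem hp') hy) hp') ?_)
      have : cprod l1 * x = (CoprodI.of p.2)⁻¹ * (CoprodI.of p.2 * cprod l1 * x) := by group
      rw [this, he]; group
    obtain ⟨l2, q, h2⟩ : ∃ l2 q, p :: l1 = l2 ++ [q] :=
      ⟨_, _, (List.dropLast_append_getLast (List.cons_ne_nil p l1)).symm⟩
    by_cases hq : q.1 ∈ J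
    · have hq' := of_mem_csub (G := G) hq q.2
      rw [h2] at he hg hl ⊢
      rw [cprod_append] at he ⊢
      simp only [cprod_cons, cprod_nil, mul_one] at he ⊢
      refine mul_mem (ih l2 (by simpa using hl) ⟨fun q hq => hg.1 q (by simp [hq]),
        (List.isChain_append.1 hg.2).1⟩
        (CoprodI.of q.2 * x * (CoprodI.of q.2)⁻¹) (mul_mem (mul_mem hq' hx) (inv_mem hq')) ?_
        y hy ?_) hq'
      · intro h; apply hx1
        simpa using h
      · have : cprod l2 * (CoprodI.of q.2 * x * (CoprodI.of q.2)⁻¹) =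
          (cprod l2 * CoprodI.of q.2 * x) * (CoprodI.of q.2)⁻¹ := by group
        rw [this, he]; group
    exfalso
    obtain ⟨lx, hlx, rfl, hxJ⟩ := exists_cgood_of_mem hx
    obtain ⟨ly, hly, rfl, hyJ⟩ := exists_cgood_of_mem hy
    have hxne : lx ≠ [] := by rintro rfl; simp at hx1
    rw [← cprod_append, ← cprod_append] at he
    have := cgood_inj ⟨?_, ?_⟩ ⟨?_, ?_⟩ he
    · have h3 := congrArg List.getLast? this
      rw [List.getLast?_append_of_ne_nil _ hxne, h2, ← List.append_assoc, List.getLast?_concat] at h3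
      exact hq (hxJ q (List.mem_of_getLast? h3))
    · intro r hr
      rcases List.mem_append.1 hr with hr | hr
      exacts [hg.1 r hr, hlx.1 r hr]
    · rw [List.isChain_append]
      refine ⟨hg.2, hlx.2, fun a ha b hb hab => ?_⟩
      rw [h2, List.getLast?_concat] at ha
      have ha' : q = a := by simpa using ha
      subst ha'
      exact hq (hab ▸ hxJ b (List.mem_of_mem_head? hb))
    · intro r hr
      rcases List.mem_append.1 hr with hr | hr
      exacts [hly.1 r hr, hg.1 r hr]
    · rw [List.isChain_append]
      refine ⟨hly.2, hg.2, fun a ha b hb hab => ?_⟩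
      have hb' : p = b := by simpa using hb
      subst hb'
      exact hp (hab ▸ hyJ a (List.mem_of_getLast? ha))

end Coprod

section Free
variable {X : Type*}

/-- free subgroup on a subset of the letters -/
def FS (Y : Set X) : Subgroup (FreeGroup X) := Subgroup.closure (FreeGroup.of '' Y)

lemma FS_mono {Y Z : Set X} (h : Y ⊆ Z) : FS Y ≤ FS Z :=
  Subgroup.closure_mono (Set.image_mono h)

lemma of_mem_FS {Y : Set X} {x : X} (h : x ∈ Y) : FreeGroup.of x ∈ FS Y :=
  Subgroup.subset_closure ⟨x, h, rfl⟩

lemma mk_cons' (x : X) (b : Bool) (l) :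
    FreeGroup.mk ((x, b) :: l) = (cond b (FreeGroup.of x) (FreeGroup.of x)⁻¹) * FreeGroup.mk l := by
  cases b <;> rfl

lemma mk_mem_FS {Y : Set X} {l : List (X × Bool)} (h : ∀ p ∈ l, p.1 ∈ Y) :
    FreeGroup.mk l ∈ FS Y := by
  induction l with
  | nil => exact one_mem _
  | cons p l ih =>
    obtain ⟨x, b⟩ := p
    rw [mk_cons']
    refine mul_mem ?_ (ih fun q hq => h q (by simp [hq]))
    have := of_mem_FS (h (x, b) (by simp))
    cases b
    · exact inv_mem this
    · exact this

lemma exists_mk_of_mem_FS {Y : Set X} {w : FreeGroup X} (hw : w ∈ FS Y) :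
    ∃ l, FreeGroup.mk l = w ∧ ∀ p ∈ l, p.1 ∈ Y := by
  induction hw using Subgroup.closure_induction with
  | mem x hx =>
    obtain ⟨y, hy, rfl⟩ := hx
    exact ⟨[(y, true)], rfl, by simpa using hy⟩
  | one => exact ⟨[], rfl, by simp⟩
  | mul x y _ _ hx hy =>
    obtain ⟨l, rfl, hl⟩ := hx
    obtain ⟨l', rfl, hl'⟩ := hy
    exact ⟨l ++ l', by simp, fun p hp => (List.mem_append.1 hp).elim (hl p) (hl' p)⟩
  | inv x _ hx =>
    obtain ⟨l, rfl, hl⟩ := hx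
    refine ⟨FreeGroup.invRev l, by simp, ?_⟩
    rintro p hp
    simp only [FreeGroup.invRev, List.mem_reverse, List.mem_map] at hp
    obtain ⟨q, hq, rfl⟩ := hp
    exact hl q hq

lemma toWord_mem_FS [DecidableEq X] {Y : Set X} {w : FreeGroup X} (hw : w ∈ FS Y) :
    ∀ p ∈ w.toWord, p.1 ∈ Y := by
  obtain ⟨l, rfl, hl⟩ := exists_mk_of_mem_FS hw
  intro p hp
  rw [FreeGroup.toWord_mk] at hp
  exact hl p ((FreeGroup.reduce.red (L := l)).sublist.subset hp)

lemma mem_FS_iff [DecidableEq X] {Y : Set X} {w : FreeGroup X} :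
    w ∈ FS Y ↔ ∀ p ∈ w.toWord, p.1 ∈ Y :=
  ⟨toWord_mem_FS, fun h => by have := mk_mem_FS h; rwa [FreeGroup.mk_toWord] at this⟩

lemma FS_inter (Y Z : Set X) : FS Y ⊓ FS Z = FS (Y ∩ Z) := by
  classical
  ext w
  simp only [Subgroup.mem_inf, mem_FS_iff, Set.mem_inter_iff]
  exact ⟨fun h p hp => ⟨h.1 p hp, h.2 p hp⟩, fun h => ⟨fun p hp => (h p hp).1, fun p hp => (h p hp).2⟩⟩

lemma reduced_inj {l l' : List (X × Bool)} (h : FreeGroup.IsReduced l) (h' : FreeGroup.IsReduced l')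
    (he : FreeGroup.mk l = FreeGroup.mk l') : l = l' := by
  classical
  have := congrArg FreeGroup.toWord he
  rw [FreeGroup.toWord_mk, FreeGroup.toWord_mk] at this
  rwa [h.reduce_eq, h'.reduce_eq] at this

theorem FS_malnormal (J : Set X) : (FS J).IsMalnormal := by
  classical
  suffices key : ∀ (N : ℕ) (l : List (X × Bool)), l.length = N → FreeGroup.IsReduced l → ∀ x ∈ FS J,
      x ≠ 1 → ∀ y ∈ FS J, FreeGroup.mk l * x = y * FreeGroup.mk l → FreeGroup.mk l ∈ FS J by
    rintro g ⟨x, hx1, hx, hg⟩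
    have := key _ g.toWord rfl FreeGroup.isReduced_toWord x hx hx1 _ hg
      (by rw [FreeGroup.mk_toWord]; group)
    rwa [FreeGroup.mk_toWord] at this
  intro N
  induction N with
  | zero =>
    intro l hl _ x _ _ y _ _
    obtain rfl : l = [] := List.length_eq_zero_iff.1 hl
    exact one_mem _
  | succ N ih =>
    intro l hl hg x hx hx1 y hy he
    obtain ⟨p, l1, rfl⟩ := List.exists_cons_of_ne_nil (List.ne_nil_of_length_eq_add_one hl)
    by_cases hp : p.1 ∈ J
    · have hp' : FreeGroup.mk [p] ∈ FS J := mk_mem_FS (by simpa using hp)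
      have e1 : FreeGroup.mk (p :: l1) = FreeGroup.mk [p] * FreeGroup.mk l1 := by
        rw [FreeGroup.mul_mk]; rfl
      rw [e1] at he ⊢
      refine mul_mem hp' (ih l1 (by simpa using hl) (List.IsChain.tail hg)
        x hx hx1 ((FreeGroup.mk [p])⁻¹ * y * FreeGroup.mk [p])
        (mul_mem (mul_mem (inv_mem hp') hy) hp') ?_)
      have : FreeGroup.mk l1 * x = (FreeGroup.mk [p])⁻¹ * (FreeGroup.mk [p] * FreeGroup.mk l1 * x) := by group
      rw [this, he]; group
    obtain ⟨l2, q, h2⟩ : ∃ l2 q, p :: l1 = l2 ++ [q] :=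
      ⟨_, _, (List.dropLast_append_getLast (List.cons_ne_nil p l1)).symm⟩
    by_cases hq : q.1 ∈ J
    · have hq' : FreeGroup.mk [q] ∈ FS J := mk_mem_FS (by simpa using hq)
      rw [h2] at he hg hl ⊢
      rw [← FreeGroup.mul_mk] at he ⊢
      refine mul_mem (ih l2 (by simpa using hl) (List.isChain_append.1 hg).1
        (FreeGroup.mk [q] * x * (FreeGroup.mk [q])⁻¹) (mul_mem (mul_mem hq' hx) (inv_mem hq')) ?_
        y hy ?_) hq'
      · intro h; apply hx1
        have : x = (FreeGroup.mk [q])⁻¹ * (FreeGroup.mk [q] * x * (FreeGroup.mk [q])⁻¹) * FreeGroup.mk [q] := by group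
        rw [this, h]; group
      · have : FreeGroup.mk l2 * (FreeGroup.mk [q] * x * (FreeGroup.mk [q])⁻¹) =
          (FreeGroup.mk l2 * FreeGroup.mk [q] * x) * (FreeGroup.mk [q])⁻¹ := by group
        rw [this, he]; group
    exfalso
    have hxJ := toWord_mem_FS hx
    have hyJ := toWord_mem_FS hy
    have hxne : x.toWord ≠ [] := by rwa [Ne, FreeGroup.toWord_eq_nil_iff]
    have hx2 := FreeGroup.isReduced_toWord (x := x)
    have hy2 := FreeGroup.isReduced_toWord (x := y)
    have he' : FreeGroup.mk ((p :: l1) ++ x.toWord) = FreeGroup.mk (y.toWord ++ (p :: l1)) := by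
      rw [← FreeGroup.mul_mk, ← FreeGroup.mul_mk, FreeGroup.mk_toWord, FreeGroup.mk_toWord, he]
    have := reduced_inj ?_ ?_ he'
    · have h3 := congrArg List.getLast? this
      rw [List.getLast?_append_of_ne_nil _ hxne, h2, ← List.append_assoc, List.getLast?_concat] at h3
      exact hq (hxJ q (List.mem_of_getLast? h3))
    · rw [FreeGroup.IsReduced, List.isChain_append]
      refine ⟨hg, hx2, fun a ha b hb hab => ?_⟩
      rw [h2, List.getLast?_concat] at ha
      have ha' : q = a := by simpa using ha
      subst ha'
      exact (hq (hab ▸ hxJ b (List.mem_of_mem_head? hb))).elim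
    · rw [FreeGroup.IsReduced, List.isChain_append]
      refine ⟨hy2, hg, fun a ha b hb hab => ?_⟩
      have hb' : p = b := by simpa using hb
      subst hb'
      exact (hp (hab ▸ hyJ a (List.mem_of_getLast? ha))).elim

lemma FS_map {X' : Type*} (f : X → X') (Y : Set X) :
    (FS Y).map (FreeGroup.map f) = FS (f '' Y) := by
  rw [FS, MonoidHom.map_closure, FS]
  congr 1
  ext w; simp

end Free
end OneRel
end Part2

section Part3
namespace OneRel
section Pres
variable {X : Type*}

/-- one-relator group with relator `L ^ n` -/
abbrev GP (L : List (X × Bool)) (n : ℕ) : Type _ :=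
  PresentedGroup ({FreeGroup.mk L ^ n} : Set (FreeGroup X))

/-- projection from the free group -/
def pi (L : List (X × Bool)) (n : ℕ) : FreeGroup X →* GP L n := PresentedGroup.mk _

lemma pi_surj (L : List (X × Bool)) (n : ℕ) : Function.Surjective (pi L n) :=
  PresentedGroup.mk_surjective _

lemma pi_rel (L : List (X × Bool)) (n : ℕ) : pi L n (FreeGroup.mk L) ^ n = 1 := by
  rw [← map_pow]
  exact PresentedGroup.one_of_mem (Set.mem_singleton _)

/-- universal property -/
def gpLift {K : Type*} [Group K] (L : List (X × Bool)) (n : ℕ) (f : FreeGroup X →* K)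
    (h : f (FreeGroup.mk L) ^ n = 1) : GP L n →* K :=
  QuotientGroup.lift _ f (by
    apply Subgroup.normalClosure_le_normal
    rintro _ rfl
    exact MonoidHom.mem_ker.2 (by rw [map_pow]; exact h))

@[simp] lemma gpLift_pi {K : Type*} [Group K] (L : List (X × Bool)) (n : ℕ) (f : FreeGroup X →* K)
    (h : f (FreeGroup.mk L) ^ n = 1) (w : FreeGroup X) : gpLift L n f h (pi L n w) = f w := rfl

/-- Magnus-type subgroups -/
def MS (L : List (X × Bool)) (n : ℕ) (Y : Set X) : Subgroup (GP L n) := (FS Y).map (pi L n)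

lemma MS_mono (L : List (X × Bool)) (n : ℕ) {Y Z : Set X} (h : Y ⊆ Z) : MS L n Y ≤ MS L n Z :=
  Subgroup.map_mono (FS_mono h)

lemma pi_mem_MS {L : List (X × Bool)} {n : ℕ} {Y : Set X} {w} (h : w ∈ FS Y) : pi L n w ∈ MS L n Y :=
  ⟨w, h, rfl⟩

/-- letters of a word -/
def lett (L : List (X × Bool)) : Set X := {x | ∃ b, (x, b) ∈ L}

lemma lett_eq (L : List (X × Bool)) : lett L = {x | x ∈ L.map Prod.fst} := by
  ext x; simp [lett]

lemma lett_finite (L : List (X × Bool)) : (lett L).Finite := by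
  rw [lett_eq]; exact List.finite_toSet _

/-- the inductive package -/
structure Magnus (n : ℕ) (L : List (X × Bool)) : Prop where
  F : ∀ x ∈ lett L, ∀ w ∈ FS ({x}ᶜ : Set X), pi L n w = 1 → w = 1
  M : ∀ x ∈ lett L, (MS L n {x}ᶜ).IsMalnormal
  I : ∀ x ∈ lett L, ∀ z ∈ lett L, x ≠ z → MS L n {x}ᶜ ⊓ MS L n {z}ᶜ ≤ MS L n {x, z}ᶜ

variable {n : ℕ} {L : List (X × Bool)}

lemma sub_compl {Y : Set X} {x : X} (h : x ∉ Y) : Y ⊆ {x}ᶜ := by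
  rintro y hy rfl; exact h hy

lemma Magnus.inj (H : Magnus n L) {x : X} (hx : x ∈ lett L) {w w' : FreeGroup X}
    (hw : w ∈ FS ({x}ᶜ : Set X)) (hw' : w' ∈ FS ({x}ᶜ : Set X)) (he : pi L n w = pi L n w') :
    w = w' := by
  rw [← mul_inv_eq_one]
  apply H.F x hx _ (mul_mem hw (inv_mem hw'))
  rw [map_mul, map_inv, he, mul_inv_cancel]

lemma Magnus.gM (H : Magnus n L) {x : X} (hx : x ∈ lett L) {Y : Set X} (hY : x ∉ Y) :
    (MS L n Y).IsMalnormal := by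
  rintro g ⟨_, h1, ⟨w, hw, rfl⟩, ⟨w', hw', he⟩⟩
  have hs := FS_mono (sub_compl hY)
  obtain ⟨v, hv, rfl⟩ := H.M x hx g ⟨pi L n w, h1, pi_mem_MS (hs hw), by
    rw [← he]; exact pi_mem_MS (hs hw')⟩
  refine pi_mem_MS (FS_malnormal Y v ⟨w, ?_, hw, ?_⟩)
  · rintro rfl; simp at h1
  · have : w' = v * w * v⁻¹ := by
      refine H.inj hx (hs hw') (mul_mem (mul_mem hv (hs hw)) (inv_mem hv)) ?_
      rw [he]; simp
    rwa [← this]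

lemma Magnus.gI (H : Magnus n L) {x z : X} (hx : x ∈ lett L) (hz : z ∈ lett L) {Y Z : Set X}
    (hY : x ∉ Y) (hZ : z ∉ Z) {g : GP L n} (h1 : g ∈ MS L n Y) (h2 : g ∈ MS L n Z) :
    g ∈ MS L n (Y ∩ Z) := by
  have hs := FS_mono (sub_compl hY)
  have hs' := FS_mono (sub_compl hZ)
  obtain ⟨v, hv, rfl⟩ : g ∈ MS L n {x, z}ᶜ := by
    by_cases hxz : x = z
    · subst hxz
      simpa using MS_mono L n (sub_compl hY) h1
    · exact H.I x hx z hz hxz ⟨MS_mono L n (sub_compl hY) h1, MS_mono L n (sub_compl hZ) h2⟩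
  obtain ⟨w, hw, h1⟩ := h1
  obtain ⟨w', hw', h2⟩ := h2
  have e1 : w = v := H.inj hx (hs hw) (FS_mono (by intro y; simp; tauto) hv) h1
  have e2 : w' = v := H.inj hz (hs' hw') (FS_mono (by intro y; simp) hv) h2
  refine pi_mem_MS ?_
  rw [← FS_inter]
  exact ⟨e1 ▸ hw, e2 ▸ hw'⟩

end Pres
end OneRel
end Part3

section Part4
namespace OneRel
section Step
variable {X : Type*}

/-- lift of a word to levels -/
def lft (φ : X → ℤ) : ℤ → List (X × Bool) → List ((X × ℤ) × Bool)
  | _, [] => []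
  | k, (x, true) :: l => ((x, k), true) :: lft φ (k + φ x) l
  | k, (x, false) :: l => ((x, k - φ x), false) :: lft φ (k - φ x) l

/-- total weight -/
def wt (φ : X → ℤ) : List (X × Bool) → ℤ
  | [] => 0
  | (x, true) :: l => φ x + wt φ l
  | (x, false) :: l => - φ x + wt φ l

lemma lft_map (φ : X → ℤ) (k : ℤ) (l) :
    (lft φ k l).map (fun p => (p.1.1, p.2)) = l := by
  induction l generalizing k with
  | nil => rfl
  | cons p l ih => obtain ⟨x, _ | _⟩ := p <;> simp [lft, ih]

lemma lft_lett (φ : X → ℤ) (k : ℤ) (l) {p : X × ℤ} (hp : p ∈ lett (lft φ k l)) : p.1 ∈ lett l := by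
  obtain ⟨b, hb⟩ := hp
  refine ⟨b, ?_⟩
  rw [← lft_map φ k l]
  exact List.mem_map.2 ⟨_, hb, rfl⟩

lemma lft_lett' (φ : X → ℤ) (k : ℤ) (l) {x : X} (hx : x ∈ lett l) :
    ∃ i, (x, i) ∈ lett (lft φ k l) := by
  obtain ⟨b, hb⟩ := hx
  rw [← lft_map φ k l] at hb
  obtain ⟨⟨⟨y, i⟩, c⟩, h1, h2⟩ := List.mem_map.1 hb
  obtain ⟨rfl, rfl⟩ := Prod.mk.inj h2
  exact ⟨i, _, h1⟩

/-- letters with the level of `x` in a window -/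
def Ilet (x : X) (a b : ℤ) : Set (X × ℤ) := {p | p.1 = x → a ≤ p.2 ∧ p.2 ≤ b}

/-- letters other than `x` -/
def Clet (x : X) : Set (X × ℤ) := {p | p.1 ≠ x}

/-- shift of levels -/
def shE (X : Type*) : X × ℤ ≃ X × ℤ := Equiv.prodCongr (Equiv.refl X) (Equiv.addRight 1)

@[simp] lemma shE_apply (p : X × ℤ) : shE X p = (p.1, p.2 + 1) := rfl

lemma shE_Ilet (x : X) (a b : ℤ) : shE X '' Ilet x a b = Ilet x (a + 1) (b + 1) := by
  ext ⟨y, j⟩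
  constructor
  · rintro ⟨⟨y, i⟩, h, he⟩
    simp only [shE_apply, Prod.mk.injEq] at he
    obtain ⟨rfl, rfl⟩ := he
    intro hy
    have := h hy
    simp only at this ⊢
    omega
  · intro h
    refine ⟨(y, j - 1), fun hy => ?_, by simp⟩
    have := h hy
    simp only at this ⊢
    omega

lemma shE_Clet (x : X) : shE X '' Clet x = Clet x := by
  ext ⟨y, j⟩
  constructor
  · rintro ⟨⟨y, i⟩, h, he⟩
    simp only [shE_apply, Prod.mk.injEq] at he
    obtain ⟨rfl, rfl⟩ := he
    exact h
  · intro h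
    exact ⟨(y, j - 1), h, by simp⟩

section generic
variable {X' : Type*} {n : ℕ} {L' : List (X' × Bool)}

lemma exists_phi (H : Magnus n L') {a b : X'} (ha : a ∈ lett L') (hb : b ∈ lett L') {A B : Set X'}
    (haA : a ∉ A) (hbB : b ∉ B) (e : X' ≃ X') (he : e '' A = B) :
    ∃ ph : MS L' n A ≃* MS L' n B, ∀ w (hw : w ∈ FS A),
      (ph ⟨pi L' n w, pi_mem_MS hw⟩ : GP L' n) = pi L' n (FreeGroup.map e w) := by
  have inj : ∀ {a : X'} {A : Set X'}, a ∈ lett L' → a ∉ A →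
      Function.Bijective ((pi L' n).subgroupMap (FS A)) := by
    intro a A ha haA
    refine ⟨fun w w' h => ?_, MonoidHom.subgroupMap_surjective _ _⟩
    apply Subtype.ext
    have hs := FS_mono (sub_compl haA)
    exact H.inj ha (hs w.2) (hs w'.2) (congrArg Subtype.val h)
  have hmap : (FS A).map (FreeGroup.freeGroupCongr e).toMonoidHom = FS B := by
    rw [← he, ← FS_map]; rfl
  let eA : FS A ≃* MS L' n A := MulEquiv.ofBijective _ (inj ha haA)
  let eB : FS B ≃* MS L' n B := MulEquiv.ofBijective _ (inj hb hbB)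
  let es : FS A ≃* FS B :=
    ((FreeGroup.freeGroupCongr e).subgroupMap (FS A)).trans (MulEquiv.subgroupCongr hmap)
  refine ⟨(eA.symm.trans es).trans eB, fun w hw => ?_⟩
  have h1 : (⟨pi L' n w, pi_mem_MS hw⟩ : MS L' n A) = eA ⟨w, hw⟩ := rfl
  rw [h1]
  simp only [MulEquiv.trans_apply, MulEquiv.symm_apply_apply]
  rfl

variable {E : Type*} [Group E]

end generic

section iota
open Classical in
/-- embedding of the free group -/
noncomputable def iotaF {X : Type*} {E : Type*} [Group E] (φ : X → ℤ) (x : X) (m : ℤ)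
    (o : X × ℤ → E) (t : E) : FreeGroup X →* E :=
  FreeGroup.lift fun y => t ^ (-(if y = x then m else 0)) * o (y, if y = x then m else 0) *
    t ^ (if y = x then m else 0) * t ^ φ y

variable {E : Type*} [Group E] {φ : X → ℤ} {x : X} {m M : ℤ} {t : E}

lemma up_rel {o : X × ℤ → E}
    (hrel : ∀ p ∈ Ilet x m (M - 1), t * o p = o (p.1, p.2 + 1) * t) (k : ℕ) :
    ∀ y j, (y, j) ∈ Ilet x m (M - k) → t ^ k * o (y, j) = o (y, j + k) * t ^ k := by
  induction k with
  | zero => intro y j _; simp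
  | succ k ih =>
    intro y j h
    have h1 : (y, j) ∈ Ilet x m (M - 1) := fun hy => by
      have := h hy
      push_cast at this
      simp only at this ⊢
      omega
    have h2 : (y, j + 1) ∈ Ilet x m (M - k) := fun hy => by
      have := h hy
      push_cast at this
      simp only at this ⊢
      omega
    rw [pow_succ, mul_assoc, hrel _ h1, ← mul_assoc]
    simp only
    rw [ih _ _ h2, mul_assoc]
    push_cast
    rw [add_assoc, add_comm (1 : ℤ)]

lemma iota_gen {o : X × ℤ → E}
    (hrel : ∀ p ∈ Ilet x m (M - 1), t * o p = o (p.1, p.2 + 1) * t) {y : X} {j : ℤ}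
    (h : (y, j) ∈ Ilet x m M) :
    t ^ j * iotaF φ x m o t (FreeGroup.of y) = o (y, j) * t ^ (j + φ y) := by
  simp only [iotaF, FreeGroup.lift_apply_of]
  obtain ⟨c, hc⟩ : ∃ c : ℤ, c = @ite _ (y = x) (Classical.propDecidable _) m 0 := ⟨_, rfl⟩
  rw [← hc]
  have key : t ^ (j - c) * o (y, c) = o (y, j) * t ^ (j - c) := by
    rcases le_total c j with hcj | hcj
    · obtain ⟨k, hk⟩ := Int.eq_ofNat_of_zero_le (sub_nonneg.2 hcj)
      have := up_rel hrel k y c (fun hy => by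
        have := h hy
        simp only at this hy ⊢
        rw [if_pos hy] at hc
        omega)
      rw [hk, zpow_natCast, this]
      congr 3
      omega
    · by_cases hy : y = x
      · have := h hy
        rw [if_pos hy] at hc
        simp only at this
        obtain rfl : c = j := by omega
        simp
      · obtain ⟨k, hk⟩ := Int.eq_ofNat_of_zero_le (sub_nonneg.2 hcj)
        have := up_rel hrel k y j (fun hy' => (hy hy').elim)
        have e1 : j - c = -(k : ℤ) := by omega
        have e2 : j + (k : ℤ) = c := by omega
        rw [e2] at this
        rw [e1, zpow_neg, zpow_natCast, inv_mul_eq_iff_eq_mul, ← mul_assoc, this, mul_assoc,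
          mul_inv_cancel, mul_one]
  calc t ^ j * (t ^ (-c) * o (y, c) * t ^ c * t ^ φ y)
      = (t ^ (j - c) * o (y, c)) * t ^ c * t ^ φ y := by
        rw [sub_eq_add_neg, zpow_add]; group
    _ = _ := by
      rw [key, mul_assoc (o (y, j)), ← zpow_add, mul_assoc, ← zpow_add]
      congr 2; omega

lemma iota_list {L' : List ((X × ℤ) × Bool)} {n : ℕ} {oH : GP L' n →* E} 
    (hrel : ∀ p ∈ Ilet x m (M - 1), t * oH (pi L' n (FreeGroup.of p)) =
      oH (pi L' n (FreeGroup.of (p.1, p.2 + 1))) * t) (l : List (X × Bool)) :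
    ∀ k : ℤ, (∀ p ∈ lft φ k l, p.1 ∈ Ilet x m M) →
    t ^ k * iotaF φ x m (fun p => oH (pi L' n (FreeGroup.of p))) t (FreeGroup.mk l) =
      oH (pi L' n (FreeGroup.mk (lft φ k l))) * t ^ (k + wt φ l) := by
  induction l with
  | nil =>
    intro k _
    have : (FreeGroup.mk [] : FreeGroup X) = 1 := rfl
    have h2 : (FreeGroup.mk [] : FreeGroup (X × ℤ)) = 1 := rfl
    simp [lft, wt, this, h2]
  | cons p l ih =>
    intro k h
    obtain ⟨y, b⟩ := p
    have hrel' := fun y j => iota_gen (φ := φ) (y := y) (j := j) (o := fun p => oH (pi L' n (FreeGroup.of p))) hrel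
    cases b
    · simp only [lft, wt, mk_cons', cond_false, map_mul, map_inv] at h ⊢
      have h1 := hrel' _ _ (h ((y, k - φ y), false) (by simp))
      rw [sub_add_cancel] at h1
      have h2 := ih (k - φ y) (fun p hp => h p (by simp [hp]))
      have h3 : t ^ k * (iotaF φ x m (fun p => oH (pi L' n (FreeGroup.of p))) t (FreeGroup.of y))⁻¹
          = (oH (pi L' n (FreeGroup.of (y, k - φ y))))⁻¹ * t ^ (k - φ y) := by
        rw [eq_inv_mul_iff_mul_eq, ← mul_assoc, ← h1]
        group
      rw [← mul_assoc, h3, mul_assoc, h2, ← mul_assoc]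
      congr 2; ring
    · simp only [lft, wt, mk_cons', cond_true, map_mul] at h ⊢
      have h1 := hrel' _ _ (h ((y, k), true) (by simp))
      have h2 := ih (k + φ y) (fun p hp => h p (by simp [hp]))
      rw [← mul_assoc, h1, mul_assoc, h2, ← mul_assoc]
      congr 2; ring
end iota

end Step
end OneRel
end Part4

section Part5
namespace OneRel
open HNNExtension
section Step
variable {X : Type*}

lemma Ilet_empty {x : X} {a b : ℤ} (h : b < a) : Ilet x a b = Clet x := by
  ext ⟨y, j⟩
  simp only [Ilet, Clet, Set.mem_ofPred_eq]
  constructor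
  · intro h1 hy; have := h1 hy; omega
  · intro h1 hy; exact (h1 hy).elim

lemma Clet_sub {x : X} {a b : ℤ} : Clet x ⊆ Ilet x a b := fun _ h hy => (h hy).elim

lemma map_mem_FS {X' : Type*} (e : X ≃ X') {Y : Set X} {w : FreeGroup X} :
    FreeGroup.map e w ∈ FS (e '' Y) ↔ w ∈ FS Y := by
  rw [← FS_map]
  refine Subgroup.mem_map_iff_mem ?_
  exact (FreeGroup.freeGroupCongr e).injective

theorem step_at {n : ℕ} {L : List (X × Bool)} {φ : X → ℤ} (h0 : wt φ L = 0)
    (H : Magnus n (lft φ 0 L)) {x : X} (hx : x ∈ lett L) :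
    (∀ w ∈ FS ({x}ᶜ : Set X), pi L n w = 1 → w = 1) ∧ (MS L n {x}ᶜ).IsMalnormal ∧
    ∀ z ∈ lett L, x ≠ z → MS L n {x}ᶜ ⊓ MS L n {z}ᶜ ≤ MS L n {x, z}ᶜ := by
  set L' := lft φ 0 L with hL'
  -- extreme levels
  obtain ⟨m, M, hm, hM, hmM⟩ : ∃ m M : ℤ, (x, m) ∈ lett L' ∧ (x, M) ∈ lett L' ∧
      ∀ i, (x, i) ∈ lett L' → m ≤ i ∧ i ≤ M := by
    have hfin : {i : ℤ | (x, i) ∈ lett L'}.Finite :=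
      (lett_finite L').preimage (fun i _ j _ h => (Prod.mk.inj h).2)
    have hne : {i : ℤ | (x, i) ∈ lett L'}.Nonempty := lft_lett' φ 0 L hx
    obtain ⟨m, hm, hm'⟩ := Set.exists_min_image _ id hfin hne
    obtain ⟨M, hM, hM'⟩ := Set.exists_max_image _ id hfin hne
    exact ⟨m, M, hm, hM, fun i hi => ⟨hm' i hi, hM' i hi⟩⟩
  have hmleM : m ≤ M := (hmM m hm).2
  have hAl : (x, M) ∉ Ilet x m (M - 1) := fun h => by have := h rfl; simp only at this; omega
  have hBl : (x, m) ∉ Ilet x (m + 1) M := fun h => by have := h rfl; simp only at this; omega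
  have hCl : (x, m) ∉ Clet x := fun h => h rfl
  have hshA : shE X '' Ilet x m (M - 1) = Ilet x (m + 1) M := by rw [shE_Ilet]; simp
  obtain ⟨ph, hph⟩ := exists_phi H hM hm hAl hBl (shE X) hshA
  have hAinj : ∀ {w w'}, w ∈ FS (Ilet x m (M - 1)) → w' ∈ FS (Ilet x m (M - 1)) →
      pi L' n w = pi L' n w' → w = w' := fun hw hw' =>
    H.inj hM (FS_mono (sub_compl hAl) hw) (FS_mono (sub_compl hAl) hw')
  have hBinj : ∀ {w w'}, w ∈ FS (Ilet x (m + 1) M) → w' ∈ FS (Ilet x (m + 1) M) →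
      pi L' n w = pi L' n w' → w = w' := fun hw hw' =>
    H.inj hm (FS_mono (sub_compl hBl) hw) (FS_mono (sub_compl hBl) hw')
  have hshmem : ∀ {w}, w ∈ FS (Ilet x m (M - 1)) → FreeGroup.map (shE X) w ∈ FS (Ilet x (m + 1) M) := by
    intro w hw; rw [← hshA, map_mem_FS]; exact hw
  -- invariance of a subgroup
  have hinv : ∀ (D : Set (X × ℤ)) (q : X × ℤ), q ∈ lett L' → q ∉ D → shE X '' D = D →
      ∀ a : MS L' n (Ilet x m (M - 1)), (a : GP L' n) ∈ MS L' n D ↔ (ph a : GP L' n) ∈ MS L' n D := by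
    rintro D q hq hqD hD ⟨_, ⟨w, hw, rfl⟩⟩
    have hw' : (ph ⟨pi L' n w, pi_mem_MS hw⟩ : GP L' n) = pi L' n (FreeGroup.map (shE X) w) :=
      hph w hw
    change pi L' n w ∈ _ ↔ (ph ⟨pi L' n w, pi_mem_MS hw⟩ : GP L' n) ∈ _
    rw [hw']
    constructor
    · intro h
      obtain ⟨v, hv, he⟩ := H.gI hM hq hAl hqD (pi_mem_MS hw) h
      have : v = w := hAinj (FS_mono Set.inter_subset_left hv) hw he
      subst this
      refine pi_mem_MS ?_
      rw [← hD, map_mem_FS]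
      exact FS_mono Set.inter_subset_right hv
    · intro h
      obtain ⟨v, hv, he⟩ := H.gI hm hq hBl hqD (pi_mem_MS (hshmem hw)) h
      have : v = _ := hBinj (FS_mono Set.inter_subset_left hv) (hshmem hw) he
      subst this
      refine pi_mem_MS ?_
      rw [← map_mem_FS (shE X), hD]
      exact FS_mono Set.inter_subset_right hv
  have hC : TInv ph (MS L' n (Clet x)) :=
    ⟨MS_mono _ _ Clet_sub, MS_mono _ _ Clet_sub, hinv _ _ hm hCl (shE_Clet x)⟩
  have hstar : ∀ K : Set (GP L' n), (∀ h ∈ K, ∃ ha : h ∈ MS L' n (Ilet x m (M - 1)),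
      h ∈ MS L' n (Ilet x (m + 1) M) ∧ (ph ⟨h, ha⟩ : GP L' n) ∈ K) →
      K ⊆ (MS L' n (Clet x) : Set (GP L' n)) := by
    intro K hK
    have key : ∀ s : ℕ, ∀ h ∈ K, h ∈ MS L' n (Ilet x m (M - 1 - s)) := by
      intro s
      induction s with
      | zero => intro h hh; simpa using (hK h hh).1
      | succ s ih =>
        intro h hh
        have hsub : Ilet x m (M - 1 - s) ⊆ Ilet x m (M - 1) := fun p hp hy => by
          have := hp hy; omega
        obtain ⟨w, hw, rfl⟩ := ih h hh
        obtain ⟨ha, -, hk⟩ := hK _ hh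
        rw [hph w (FS_mono hsub hw)] at hk
        have h1 := ih _ hk
        have h2 : FreeGroup.map (shE X) w ∈ FS (Ilet x (m + 1) (M - 1 - s + 1)) := by
          rw [← shE_Ilet, map_mem_FS]; exact hw
        have hx1 : (x, M) ∉ Ilet x m (M - 1 - s) := fun h => by
          have := h rfl; simp only at this; omega
        have hx2 : (x, m) ∉ Ilet x (m + 1) (M - 1 - s + 1) := fun h => by
          have := h rfl; simp only at this; omega
        obtain ⟨v, hv, he⟩ := H.gI hM hm hx1 hx2 h1 (pi_mem_MS h2)
        have hvB : v ∈ FS (Ilet x (m + 1) M) := by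
          refine FS_mono ?_ hv
          rintro p ⟨-, hp⟩ hy
          have := hp hy; omega
        obtain rfl : v = _ := hBinj hvB (hshmem (FS_mono hsub hw)) he
        refine pi_mem_MS ?_
        rw [← map_mem_FS (shE X), shE_Ilet]
        refine FS_mono ?_ hv
        rintro p ⟨hp1, hp2⟩ hy
        have := hp1 hy
        have := hp2 hy
        push_cast
        omega
    intro h hh
    have := key (M - m).toNat h hh
    rwa [Ilet_empty (by omega)] at this
  -- the maps
  let E := HNNExtension (GP L' n) _ _ ph
  let o : X × ℤ → E := fun p => of (pi L' n (FreeGroup.of p))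
  have hrel : ∀ p ∈ Ilet x m (M - 1), (t : E) * of (pi L' n (FreeGroup.of p)) =
      of (pi L' n (FreeGroup.of (p.1, p.2 + 1))) * t := by
    intro p hp
    have h1 := t_mul_of (φ := ph) ⟨pi L' n (FreeGroup.of p), pi_mem_MS (of_mem_FS hp)⟩
    rw [hph _ (of_mem_FS hp)] at h1
    simpa using h1
  have hlist := iota_list (φ := φ) (oH := (of : GP L' n →* E)) hrel
  have hiL : iotaF φ x m o t (FreeGroup.mk L) = of (pi L' n (FreeGroup.mk L')) := by
    have := hlist L 0 (fun p hp hy => hmM _ ⟨p.2, by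
      obtain ⟨⟨y, i⟩, b⟩ := p
      simp only at hy
      subst hy
      exact hp⟩)
    simpa [h0] using this
  let io : GP L n →* E := gpLift L n (iotaF φ x m o t) (by
    rw [hiL, ← map_pow, pi_rel, map_one])
  have hio : ∀ w, io (pi L n w) = iotaF φ x m o t w := fun w => rfl
  have hioC : ∀ w ∈ FS ({x}ᶜ : Set X), ∃ c ∈ FS (Clet x), ∃ k : ℤ, FreeGroup.map Prod.fst c = w ∧
      io (pi L n w) = of (pi L' n c) * t ^ k := by
    intro w hw
    obtain ⟨l, rfl, hl⟩ := exists_mk_of_mem_FS hw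
    have hl' : ∀ p ∈ lft φ 0 l, p.1 ∈ Clet x := by
      intro p hp hy
      obtain ⟨b, hb⟩ := lft_lett φ 0 l (p := p.1) ⟨p.2, hp⟩
      exact hl _ hb hy
    refine ⟨FreeGroup.mk (lft φ 0 l), mk_mem_FS hl', wt φ l, ?_, ?_⟩
    · rw [FreeGroup.map.mk, lft_map]
    · have := hlist l 0 (fun p hp => Clet_sub (hl' p hp))
      simpa [hio] using this
  let rh0 : GP L' n →* GP L n := gpLift L' n ((pi L n).comp (FreeGroup.map Prod.fst)) (by
    rw [MonoidHom.comp_apply, FreeGroup.map.mk, lft_map, pi_rel])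
  have hrh0 : ∀ w, rh0 (pi L' n w) = pi L n (FreeGroup.map Prod.fst w) := fun w => rfl
  let rh : E →* GP L n := HNNExtension.lift rh0 1 (by
    rintro ⟨_, ⟨w, hw, rfl⟩⟩
    have hw' := hph w hw
    rw [one_mul, mul_one]
    change rh0 (pi L' n w) = rh0 (ph ⟨pi L' n w, pi_mem_MS hw⟩ : GP L' n)
    rw [hw', hrh0, hrh0, FreeGroup.map.comp]
    rfl)
  have hrh1 : ∀ g, rh (of g) = rh0 g := fun g => HNNExtension.lift_of _ _ _ _
  have hrht : rh t = 1 := HNNExtension.lift_t _ _ _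
  have hri : ∀ g, rh (io g) = g := by
    intro g
    obtain ⟨w, rfl⟩ := pi_surj L n g
    rw [hio]
    have : (rh.comp (iotaF φ x m o t)) = pi L n := by
      ext y
      simp only [iotaF, o, MonoidHom.comp_apply, FreeGroup.lift_apply_of, map_mul, map_zpow, hrht,
        hrh1, hrh0, one_zpow, one_mul, mul_one, FreeGroup.map.of]
    exact DFunLike.congr_fun this w
  have hinj : Function.Injective io := Function.LeftInverse.injective hri
  have hrC : ∀ (Y : Set (X × ℤ)) (Z : Set X), (∀ p ∈ Y, p.1 ∈ Z) → ∀ c ∈ MS L' n Y, rh0 c ∈ MS L n Z := by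
    rintro Y Z hYZ _ ⟨w, hw, rfl⟩
    rw [hrh0]
    refine pi_mem_MS (FS_mono ?_ ((FS_map Prod.fst Y).le ⟨w, hw, rfl⟩))
    rintro _ ⟨p, hp, rfl⟩
    exact hYZ p hp
  have hCx : ∀ p ∈ Clet x, p.1 ∈ ({x}ᶜ : Set X) := fun p hp => hp
  refine ⟨?_, ?_, ?_⟩
  · intro w hw h1
    obtain ⟨c, hc, k, rfl, hk⟩ := hioC w hw
    rw [h1, map_one] at hk
    have hk0 := congrArg (deg ph) hk
    rw [deg_of_mul, map_one] at hk0
    obtain rfl : k = 0 := (ofAdd_eq_one.1 hk0.symm)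
    rw [zpow_zero, mul_one] at hk
    have h2 : pi L' n c = 1 := of_injective (φ := ph) (by rw [← hk, map_one])
    rw [H.F _ hm c (FS_mono (sub_compl hCl) hc) h2, map_one]
  · have hmal := hnn_malnormal hC (H.gM hM hAl) (H.gM hm hBl) (H.gM hm hCl) hstar
    have : MS L n {x}ᶜ = (LSub hC).comap io := by
      apply le_antisymm
      · rintro _ ⟨w, hw, rfl⟩
        obtain ⟨c, hc, k, -, hk⟩ := hioC w hw
        rw [Subgroup.mem_comap, hk]
        exact mul_mem (of_mem_LSub hC (pi_mem_MS hc)) (zpow_mem (t_mem_LSub hC) k)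
      · intro g hg
        obtain ⟨c, hc, k, hk⟩ := hg
        rw [← hri g, hk, map_mul, map_zpow, hrht, one_zpow, mul_one, hrh1]
        exact hrC _ _ hCx c hc
    rw [this]
    exact malnormal_comap io hinj hmal
  · rintro z hz hxz g ⟨hgx, hgz⟩
    obtain ⟨w, hw, rfl⟩ := hgx
    obtain ⟨c, hc, k, -, hk⟩ := hioC w hw
    obtain ⟨zi, hzi⟩ := lft_lett' φ 0 L hz
    have hzD : (z, zi) ∉ Clet z := fun h => h rfl
    have h1 : ∀ w ∈ FS ({z}ᶜ : Set X), iotaF φ x m o t w ∈ Subgroup.closure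
        (((of : GP L' n →* E) '' (MS L' n (Clet z))) ∪ {t}) := by
      intro w hw
      have : FS ({z}ᶜ : Set X) ≤ (Subgroup.closure
        (((of : GP L' n →* E) '' (MS L' n (Clet z))) ∪ {t})).comap (iotaF φ x m o t) := by
        rw [FS, Subgroup.closure_le]
        rintro _ ⟨y, hy, rfl⟩
        have ht : (t : E) ∈ Subgroup.closure
          (((of : GP L' n →* E) '' (MS L' n (Clet z))) ∪ {t}) := Subgroup.subset_closure (by simp)
        simp only [iotaF, Subgroup.coe_comap, Set.mem_preimage, FreeGroup.lift_apply_of]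
        refine mul_mem (mul_mem (mul_mem (zpow_mem ht _) ?_) (zpow_mem ht _)) (zpow_mem ht _)
        exact Subgroup.subset_closure (Or.inl ⟨_, pi_mem_MS (of_mem_FS hy), rfl⟩)
      exact this hw
    obtain ⟨v, hv, hve⟩ := hgz
    have h2 := h1 v hv
    rw [← hio, hve, hk] at h2
    have ht : (t : E) ∈ Subgroup.closure
          (((of : GP L' n →* E) '' (MS L' n (Clet z))) ∪ {t}) := Subgroup.subset_closure (by simp)
    have h3 := (Subgroup.mul_mem_cancel_right _ (zpow_mem ht k)).1 h2
    have h4 := hnn_inter _ (hinv _ _ hzi hzD (shE_Clet z)) h3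
    have h5 := H.gI hm hzi hCl hzD (pi_mem_MS hc) h4
    rw [← hri (pi L n w), hk, map_mul, map_zpow, hrht, one_zpow, mul_one, hrh1]
    refine hrC _ _ ?_ _ h5
    rintro p ⟨hp1, hp2⟩ hp
    rcases hp with hp | hp
    exacts [hp1 hp, hp2 hp]

theorem step {n : ℕ} {L : List (X × Bool)} {φ : X → ℤ} (h0 : wt φ L = 0)
    (H : Magnus n (lft φ 0 L)) : Magnus n L :=
  ⟨fun _ hx => (step_at h0 H hx).1, fun _ hx => (step_at h0 H hx).2.1,
    fun _ hx => (step_at h0 H hx).2.2⟩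

end Step
end OneRel
end Part5

section Part6
namespace OneRel
section Dich
variable {X : Type*} (W : ℕ → X × Bool)

/-- partial weights along an infinite word -/
def VV (φ : X → ℤ) (i : ℕ) : ℤ :=
  ∑ j ∈ Finset.range i, (if (W j).2 then φ (W j).1 else - φ (W j).1)

/-- level of a position -/
def lev (φ : X → ℤ) (i : ℕ) : ℤ := if (W i).2 then VV W φ i else VV W φ (i + 1)

lemma VV_zero (φ : X → ℤ) : VV W φ 0 = 0 := rfl

lemma VV_succ (φ : X → ℤ) (i : ℕ) :
    VV W φ (i + 1) = VV W φ i + (if (W i).2 then φ (W i).1 else - φ (W i).1) := by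
  simp [VV, Finset.sum_range_succ]

lemma VV_lin (a b : ℤ) (φ ψ : X → ℤ) (i : ℕ) :
    VV W (fun x => a * φ x - b * ψ x) i = a * VV W φ i - b * VV W ψ i := by
  induction i with
  | zero => simp [VV_zero]
  | succ i ih =>
    rw [VV_succ, VV_succ, VV_succ, ih]
    split_ifs <;> ring

variable {W}
theorem dich {l : ℕ} (hl : 0 < l) (hper : ∀ i, W (i + l) = W i)
    (hred : ∀ i, (W i).1 = (W (i + 1)).1 → (W i).2 = (W (i + 1)).2)
    (hlev : ∀ φ : X → ℤ, VV W φ l = 0 → ∀ i j, (W i).1 = (W j).1 → lev W φ i = lev W φ j) :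
    ∃ r, 0 < r ∧ r ∣ l ∧ (∀ i, W (i + r) = W i) ∧
      ∀ i < r, ∀ j < r, (W i).1 = (W j).1 → i = j := by
  classical
  let Cl : ℕ → ℕ → Prop := fun i j => i < j ∧ ∀ φ : X → ℤ, VV W φ l = 0 → VV W φ i = VV W φ j
  let Di : ℕ → ℕ → Prop := fun i j => ∀ p q, i ≤ p → p < j → i ≤ q → q < j →
    (W p).1 = (W q).1 → p = q
  have rep : ∀ i j, i < j → (W i).1 = (W j).1 →
      ((W i).2 = (W j).2 ∧ Cl i j) ∨ ((W i).2 ≠ (W j).2 ∧ Cl (i + 1) j) := by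
    intro i j hij h
    by_cases hs : (W i).2 = (W j).2
    · left
      refine ⟨hs, hij, fun φ hφ => ?_⟩
      have h1 := hlev φ hφ i j h
      simp only [lev, VV_succ, hs, h] at h1
      split_ifs at h1 <;> linarith
    · right
      refine ⟨hs, ?_, fun φ hφ => ?_⟩
      · refine lt_of_le_of_ne hij ?_
        rintro rfl
        exact hs (hred i h)
      · have h1 := hlev φ hφ i j h
        simp only [lev, VV_succ, h] at h1 ⊢
        cases h2 : (W i).2 <;> cases h3 : (W j).2 <;> simp_all
  have mini : ∀ N i j, j - i = N → Cl i j → ∃ i' j', i ≤ i' ∧ j' ≤ j ∧ Cl i' j' ∧ Di i' j' := by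
    intro N
    induction N using Nat.strong_induction_on with
    | _ N ih =>
      intro i j hN hc
      by_cases hD : Di i j
      · exact ⟨i, j, le_rfl, le_rfl, hc, hD⟩
      · obtain ⟨p, q, hip, hpq, hqj, he⟩ : ∃ p q, i ≤ p ∧ p < q ∧ q < j ∧ (W p).1 = (W q).1 := by
          simp only [Di, not_forall] at hD
          obtain ⟨p, q, h1, h2, h3, h4, h5, h6⟩ := hD
          rcases lt_or_gt_of_ne h6 with h | h
          · exact ⟨p, q, h1, h, h4, h5⟩
          · exact ⟨q, p, h3, h, h2, h5.symm⟩
        rcases rep p q hpq he with ⟨-, h⟩ | ⟨-, h⟩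
        · obtain ⟨a, b, ha, hb, h'⟩ := ih (q - p) (by omega) p q rfl h
          exact ⟨a, b, by omega, by omega, h'⟩
        · obtain ⟨a, b, ha, hb, h'⟩ := ih (q - (p + 1)) (by omega) (p + 1) q rfl h
          exact ⟨a, b, by omega, by omega, h'⟩
  let ind : X → X → ℤ := fun y x => if x = y then 1 else 0
  let cnt : X → ℤ := fun y => VV W (ind y) l
  have hco : ∀ i j, i < j → Di i j → ∀ y,
      (∃ p, i ≤ p ∧ p < j ∧ (W p).1 = y) ↔ VV W (ind y) i ≠ VV W (ind y) j := by
    intro i j hij hD y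
    have hsum : VV W (ind y) j - VV W (ind y) i =
        ∑ p ∈ Finset.Ico i j, (if (W p).2 then ind y (W p).1 else - ind y (W p).1) := by
      rw [Finset.sum_Ico_eq_sub _ hij.le]; rfl
    constructor
    · rintro ⟨p, h1, h2, h3⟩ he
      rw [he, sub_self, Finset.sum_eq_single p] at hsum
      · simp only [ind, h3, if_true] at hsum
        split_ifs at hsum <;> omega
      · intro q hq hqp
        have : (W q).1 ≠ y := by
          rintro rfl
          rw [Finset.mem_Ico] at hq
          exact hqp (hD q p hq.1 hq.2 h1 h2 h3.symm)
        simp [ind, this]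
      · intro h; exact (h (Finset.mem_Ico.2 ⟨h1, h2⟩)).elim
    · intro h
      by_contra hcon
      push Not at hcon
      apply h
      rw [Finset.sum_eq_zero] at hsum
      · linarith
      · intro p hp
        rw [Finset.mem_Ico] at hp
        simp [ind, hcon p hp.1 hp.2]
  have supp : ∀ i j, Cl i j → Di i j → ∀ y, (∃ p, i ≤ p ∧ p < j ∧ (W p).1 = y) ↔ cnt y ≠ 0 := by
    intro i j hc hD y
    have hz := (hco i j hc.1 hD (W i).1).1 ⟨i, le_rfl, hc.1, rfl⟩
    set z := (W i).1
    have hcz : cnt z ≠ 0 := fun h => hz (hc.2 _ h)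
    rw [hco i j hc.1 hD y]
    have h1 := hc.2 (fun x => cnt z * ind y x - cnt y * ind z x) (by
      rw [VV_lin]; simp only [cnt]; ring)
    rw [VV_lin, VV_lin] at h1
    have h2 : cnt z * (VV W (ind y) j - VV W (ind y) i) =
      cnt y * (VV W (ind z) j - VV W (ind z) i) := by linarith
    constructor
    · intro h h3
      rw [h3, zero_mul, mul_eq_zero] at h2
      rcases h2 with h2 | h2
      · exact hcz h2
      · exact h (by linarith)
    · intro h h3
      rw [h3, sub_self, mul_zero, eq_comm, mul_eq_zero] at h2
      rcases h2 with h2 | h2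
      · exact h h2
      · exact hz (by linarith)
  let r := Set.ncard {y | cnt y ≠ 0}
  have hperm : ∀ k i, W (i + k * l) = W i := by
    intro k
    induction k with
    | zero => simp
    | succ k ih => intro i; rw [Nat.succ_mul, ← add_assoc, hper, ih]
  have nxt : ∀ p, cnt (W p).1 ≠ 0 → 0 < r ∧ W (p + r) = W p ∧ Di p (p + r) ∧
      ∀ q, p ≤ q → q < p + r → cnt (W q).1 ≠ 0 := by
    intro p hp
    have hex : ∃ q, p < q ∧ (W q).1 = (W p).1 := ⟨p + l, by omega, by rw [hper]⟩
    obtain ⟨hq1, hq2⟩ := Nat.find_spec hex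
    have hmin : ∀ s, p < s → s < Nat.find hex → (W s).1 ≠ (W p).1 := fun s hs hs' h =>
      Nat.find_min hex hs' ⟨hs, h⟩
    set q := Nat.find hex
    have hno : ∀ i j, p < i → j ≤ q → ¬ Cl i j := by
      intro i j hi hj hc
      obtain ⟨a, b, ha, hb, hc', hd'⟩ := mini _ i j rfl hc
      obtain ⟨s, h1, h2, h3⟩ := (supp a b hc' hd' (W p).1).2 hp
      exact hmin s (by omega) (by omega) h3
    have hsame : (W p).2 = (W q).2 ∧ Cl p q := by
      rcases rep p q hq1 hq2.symm with h | h
      · exact h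
      · exact (hno _ _ (by omega) le_rfl h.2).elim
    have hDlt : ∀ i j, p ≤ i → i < j → j < q → (W i).1 ≠ (W j).1 := by
      intro i j hi hij hj he
      rcases hi.eq_or_lt with rfl | hi
      · exact hmin j hij hj he.symm
      · rcases rep i j hij he with h | h
        · exact hno _ _ hi hj.le h.2
        · exact hno _ _ (by omega) hj.le h.2
    have hD : Di p q := by
      intro i j h1 h2 h3 h4 he
      rcases lt_trichotomy i j with h | h | h
      · exact (hDlt i j h1 h h4 he).elim
      · exact h
      · exact (hDlt j i h3 h h2 he.symm).elim
    have hset : {y | cnt y ≠ 0} = (fun i => (W i).1) '' (Finset.Ico p q : Set ℕ) := by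
      ext y
      change cnt y ≠ 0 ↔ _
      rw [← supp p q hsame.2 hD y]
      constructor
      · rintro ⟨s, h1, h2, h3⟩
        exact ⟨s, by simp [h1, h2], h3⟩
      · rintro ⟨s, h1, h3⟩
        simp at h1
        exact ⟨s, h1.1, h1.2, h3⟩
    have hr : r = q - p := by
      simp only [r]
      rw [hset, Set.InjOn.ncard_image, Set.ncard_coe_finset, Nat.card_Ico]
      intro i hi j hj he
      simp at hi hj
      exact hD i j hi.1 hi.2 hj.1 hj.2 he
    have hq : p + r = q := by omega
    rw [hq]
    refine ⟨by omega, Prod.ext hq2 hsame.1.symm, hD, fun s h1 h2 => ?_⟩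
    exact (supp p q hsame.2 hD _).1 ⟨s, h1, h2, rfl⟩
  obtain ⟨p0, hp0⟩ : ∃ p, cnt (W p).1 ≠ 0 := by
    obtain ⟨a, b, -, -, hc, hd⟩ := mini _ 0 l rfl ⟨hl, fun φ h => by rw [VV_zero, h]⟩
    exact ⟨a, (supp a b hc hd _).1 ⟨a, le_rfl, hc.1, rfl⟩⟩
  have hr0 : 0 < r := (nxt p0 hp0).1
  have hall' : ∀ k, cnt (W (p0 + k)).1 ≠ 0 := by
    intro k
    induction k using Nat.strong_induction_on with
    | _ k ih =>
      by_cases hk : k < r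
      · exact (nxt p0 hp0).2.2.2 _ (by omega) (by omega)
      · have h1 := ih (k - r) (by omega)
        have h2 := (nxt _ h1).2.1
        rw [show p0 + (k - r) + r = p0 + k by omega] at h2
        rwa [h2]
  have hall : ∀ i, cnt (W i).1 ≠ 0 := by
    intro i
    have h1 : p0 ≤ i + p0 * l := by nlinarith
    have := hall' (i + p0 * l - p0)
    rwa [show p0 + (i + p0 * l - p0) = i + p0 * l by omega, hperm] at this
  have hpr : ∀ i, W (i + r) = W i := fun i => (nxt i (hall i)).2.1
  have hD0 : ∀ i < r, ∀ j < r, (W i).1 = (W j).1 → i = j := fun i hi j hj he =>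
    (nxt 0 (hall 0)).2.2.1 i j (by omega) (by omega) (by omega) (by omega) he
  refine ⟨r, hr0, ?_, hpr, hD0⟩
  have hp : Function.Periodic W r := hpr
  have h1 : W (l % r) = W 0 := by rw [hp.map_mod_nat, ← hper 0, zero_add]
  exact Nat.dvd_of_mod_eq_zero (hD0 _ (Nat.mod_lt _ hr0) 0 hr0 (by rw [h1]))

end Dich
end OneRel
end Part6

section Part7
namespace OneRel
section DL
variable {X : Type*}

lemma wt_append (φ : X → ℤ) (l l' : List (X × Bool)) : wt φ (l ++ l') = wt φ l + wt φ l' := by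
  induction l with
  | nil => simp [wt]
  | cons p l ih => obtain ⟨x, _ | _⟩ := p <;> simp [wt, ih] <;> ring

lemma lft_length (φ : X → ℤ) (k : ℤ) (l) : (lft φ k l).length = l.length := by
  conv_rhs => rw [← lft_map φ k l]
  simp

lemma lft_getElem (φ : X → ℤ) (l : List (X × Bool)) : ∀ (k : ℤ) (i : ℕ), (lft φ k l)[i]? =
    (l[i]?).map fun p => ((p.1, k + wt φ (l.take i) + (if p.2 then 0 else - φ p.1)), p.2) := by
  induction l with
  | nil => intro k i; simp [lft]
  | cons p l ih =>
    intro k i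
    obtain ⟨x, b⟩ := p
    cases i with
    | zero => cases b <;> simp [lft, wt] <;> ring
    | succ i =>
      cases b
      · simp only [lft, List.getElem?_cons_succ, ih, List.take_succ_cons, wt]
        simp only [sub_eq_add_neg, add_assoc]
      · simp only [lft, List.getElem?_cons_succ, ih, List.take_succ_cons, wt]
        simp only [add_assoc]

lemma lft_cyc (φ : X → ℤ) (k : ℤ) {l : List (X × Bool)} (h : FreeGroup.IsCyclicallyReduced l) :
    FreeGroup.IsCyclicallyReduced (lft φ k l) := by
  rw [FreeGroup.isCyclicallyReduced_iff] at h ⊢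
  rw [← lft_map φ k l] at h
  obtain ⟨h1, h2⟩ := h
  refine ⟨?_, ?_⟩
  · rw [FreeGroup.IsReduced, List.isChain_map] at h1
    exact h1.imp fun a b hab he => hab (congrArg (fun q : X × ℤ => q.1) he)
  · intro a ha b hb he
    rw [List.getLast?_map, List.head?_map] at h2
    exact h2 _ (Option.mem_map_of_mem _ ha) _ (Option.mem_map_of_mem _ hb)
      (congrArg (fun q : X × ℤ => q.1) he)

lemma per_list {r : ℕ} (k : ℕ) : ∀ (L : List (X × Bool)), L.length = k * r →
    (∀ i, i + r < L.length → L[i + r]? = L[i]?) → L = (List.replicate k (L.take r)).flatten := by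
  induction k with
  | zero => intro L hL _; simpa using hL
  | succ k ih =>
    intro L hL hp
    have h1 : (L.drop r).length = k * r := by rw [List.length_drop, hL, Nat.succ_mul]; omega
    have h2 := ih (L.drop r) h1 (fun i hi => by
      rw [List.length_drop] at hi
      rw [List.getElem?_drop, List.getElem?_drop, add_comm r (i + r), add_comm r i]
      exact hp (i + r) (by omega))
    conv_lhs => rw [← List.take_append_drop r L, h2]
    rw [List.replicate_succ, List.flatten_cons]
    congr 1
    cases k with
    | zero => simp
    | succ k =>
      congr 2
      apply List.ext_getElem?
      intro i
      rw [List.getElem?_take, List.getElem?_take, List.getElem?_drop, add_comm r i]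
      split_ifs with hi
      · exact hp i (by rw [hL]; nlinarith)
      · rfl

theorem dich_list {L : List (X × Bool)} (hL : FreeGroup.IsCyclicallyReduced L) (hne : L ≠ []) :
    (∃ φ : X → ℤ, wt φ L = 0 ∧ (lett L).ncard < (lett (lft φ 0 L)).ncard) ∨
    ∃ (S : List (X × Bool)) (k : ℕ), L = (List.replicate k S).flatten ∧ (S.map Prod.fst).Nodup ∧
      S ≠ [] ∧ 0 < k := by
  have hl : 0 < L.length := List.length_pos_iff.2 hne
  set l := L.length with hldef
  let W : ℕ → X × Bool := fun i => L[i % l]'(Nat.mod_lt _ hl)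
  have hWi : ∀ i, (h : i < l) → W i = L[i] := fun i h => by simp [W, Nat.mod_eq_of_lt h]
  have hper : ∀ i, W (i + l) = W i := fun i => by simp [W]
  obtain ⟨hr1, hr2⟩ := (FreeGroup.isCyclicallyReduced_iff).1 hL
  have hred : ∀ i, (W i).1 = (W (i + 1)).1 → (W i).2 = (W (i + 1)).2 := by
    intro i
    have hWm : ∀ j, W j = W (j % l) := fun j => by simp [W]
    have hi : i % l < l := Nat.mod_lt _ hl
    rw [hWm i, hWm (i + 1), Nat.add_mod, hWi _ hi]
    by_cases h : i % l + 1 < l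
    · have h1 : 1 % l = 1 := Nat.mod_eq_of_lt (by omega)
      rw [h1, Nat.mod_eq_of_lt h, hWi _ h]
      exact (List.isChain_iff_getElem.1 hr1) (i % l) h
    · have h1 : (i % l + 1 % l) % l = 0 := by
        rw [← Nat.add_mod]
        have : i % l + 1 = l := by omega
        rw [Nat.add_mod]
        by_cases hl1 : l = 1
        · rw [hl1, Nat.mod_one]
        · rw [Nat.mod_eq_of_lt (show 1 < l by omega), this, Nat.mod_self]
      rw [h1, hWi 0 hl]
      refine hr2 _ ?_ _ ?_
      · rw [List.getLast?_eq_getElem?]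
        have : i % l = L.length - 1 := by omega
        simp [← this]
      · rw [List.head?_eq_getElem?]
        exact List.getElem?_eq_getElem _
  have hV : ∀ φ : X → ℤ, ∀ i ≤ l, VV W φ i = wt φ (L.take i) := by
    intro φ i
    induction i with
    | zero => intro _; simp [VV_zero, wt]
    | succ i ih =>
      intro hi
      rw [VV_succ, ih (by omega), List.take_succ_eq_append_getElem (by omega : i < L.length), wt_append,
        hWi i (by omega)]
      generalize L[i] = p
      obtain ⟨x, _ | _⟩ := p <;> simp [wt]
  have hVl : ∀ φ : X → ℤ, VV W φ l = wt φ L := fun φ => by rw [hV φ l le_rfl, List.take_length]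
  by_cases hlev : ∀ φ : X → ℤ, VV W φ l = 0 → ∀ i j, (W i).1 = (W j).1 → lev W φ i = lev W φ j
  · right
    obtain ⟨r, hr0, ⟨k, hk⟩, hpr, hD⟩ := dich hl hper hred hlev
    have hk0 : 0 < k := by
      rcases Nat.eq_zero_or_pos k with rfl | h
      · omega
      · exact h
    have hrl : r ≤ l := by rw [hk]; nlinarith
    refine ⟨L.take r, k, per_list k L (by rw [← hldef, hk, mul_comm]) ?_, ?_, ?_, hk0⟩
    · intro i hi
      rw [List.getElem?_eq_getElem hi, List.getElem?_eq_getElem (by omega),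
        ← hWi _ (by omega), ← hWi _ (by omega), hpr]
    · rw [List.nodup_iff_injective_getElem]
      rintro ⟨i, hi⟩ ⟨j, hj⟩ he
      simp only [List.length_map, List.length_take] at hi hj
      simp only [List.getElem_map, List.getElem_take] at he
      apply Fin.ext
      refine hD i (by omega) j (by omega) ?_
      rw [hWi i (by omega), hWi j (by omega)]
      exact he
    · intro h
      have := congrArg List.length h
      rw [List.length_take, min_eq_left hrl, List.length_nil] at this
      omega
  · left
    push Not at hlev
    obtain ⟨φ, hφ, i, j, hij, hne'⟩ := hlev
    refine ⟨φ, by rw [← hVl]; exact hφ, ?_⟩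
    have hVper : ∀ i, VV W φ (i + l) = VV W φ i := by
      intro i
      induction i with
      | zero => rw [zero_add, hφ, VV_zero]
      | succ i ih => rw [show i + 1 + l = (i + l) + 1 by omega, VV_succ, VV_succ, ih, hper]
    have hlper : Function.Periodic (lev W φ) l := by
      intro i
      rw [lev, lev, hper, hVper, show i + l + 1 = (i + 1) + l by omega, hVper]
    have hmem : ∀ i, ((W i).1, lev W φ i) ∈ lett (lft φ 0 L) := by
      intro i
      have hi := Nat.mod_lt i hl
      have h1 : W i = W (i % l) := by simp [W]
      rw [← hlper.map_mod_nat i, h1]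
      have h2 := lft_getElem φ L 0 (i % l)
      rw [List.getElem?_eq_getElem hi, ← hWi _ hi] at h2
      refine ⟨(W (i % l)).2, ?_⟩
      have h3 := List.mem_of_getElem? h2
      convert h3 using 3
      rw [lev, VV_succ, hV φ _ hi.le, zero_add]
      split_ifs <;> simp
    have himg : lett L = Prod.fst '' lett (lft φ 0 L) := by
      ext x
      constructor
      · intro hx
        obtain ⟨i, hi⟩ := lft_lett' φ 0 L hx
        exact ⟨_, hi, rfl⟩
      · rintro ⟨p, hp, rfl⟩
        exact lft_lett φ 0 L hp
    rw [himg]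
    refine lt_of_le_of_ne (Set.ncard_image_le (lett_finite _)) fun he => ?_
    have hinj := Set.injOn_of_ncard_image_eq he (lett_finite _)
    exact hne' (Prod.mk.inj (hinj (hmem i) (hmem j) hij)).2

lemma lett_ncard_le (L : List (X × Bool)) : (lett L).ncard ≤ L.length := by
  classical
  have : lett L = ((L.map Prod.fst).toFinset : Set X) := by rw [lett_eq]; ext; simp
  rw [this, Set.ncard_coe_finset]
  exact (List.toFinset_card_le _).trans (by simp)

end DL
end OneRel
end Part7

section Part8
namespace OneRel
open Monoid
section Base
variable {X : Type*}

lemma hom_eq_on_FS {K : Type*} [Group K] {f g : FreeGroup X →* K} {Y : Set X}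
    (h : ∀ y ∈ Y, f (FreeGroup.of y) = g (FreeGroup.of y)) {w : FreeGroup X} (hw : w ∈ FS Y) :
    f w = g w := by
  have : FS Y ≤ f.eqLocus g := by
    rw [FS, Subgroup.closure_le]
    rintro _ ⟨y, hy, rfl⟩
    exact h y hy
  exact this hw

/-- sign of a letter -/
def sg (b : Bool) : ℤ := if b then 1 else -1

lemma sg_mul (b : Bool) : sg b * sg b = 1 := by cases b <;> rfl

lemma mk_split (P Q : List (X × Bool)) (x : X) (b : Bool) :
    FreeGroup.mk (P ++ (x, b) :: Q) =
      FreeGroup.mk P * FreeGroup.of x ^ sg b * FreeGroup.mk Q := by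
  rw [← FreeGroup.mul_mk, mk_cons', mul_assoc]
  cases b <;> simp [sg]

lemma sg_pow_inj {K : Type*} [Group K] {a c : K} (b : Bool) (h : a ^ sg b = c ^ sg b) : a = c := by
  have := congrArg (· ^ sg b) h
  simpa only [← zpow_mul, sg_mul, zpow_one] using this

variable {P Q : List (X × Bool)} {x : X} {b : Bool}

lemma solve {K : Type*} [Group K] (hP : ∀ p ∈ P, p.1 ≠ x) (hQ : ∀ p ∈ Q, p.1 ≠ x)
    (f : X → K) (s : K) : ∃ θ : FreeGroup X →* K, (∀ y, y ≠ x → θ (FreeGroup.of y) = f y) ∧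
      θ (FreeGroup.mk (P ++ (x, b) :: Q)) = s := by
  classical
  let θ0 := FreeGroup.lift f
  let θ := FreeGroup.lift (Function.update f x
    (((θ0 (FreeGroup.mk P))⁻¹ * s * (θ0 (FreeGroup.mk Q))⁻¹) ^ sg b))
  have h1 : ∀ y, y ≠ x → θ (FreeGroup.of y) = f y := fun y hy => by
    simp [θ, Function.update_of_ne hy]
  have h2 : ∀ w ∈ FS ({x}ᶜ : Set X), θ w = θ0 w := fun w hw =>
    hom_eq_on_FS (fun y hy => by rw [h1 y hy]; simp [θ0]) hw
  refine ⟨θ, h1, ?_⟩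
  rw [mk_split, map_mul, map_mul, h2 _ (mk_mem_FS hP), h2 _ (mk_mem_FS hQ), map_zpow]
  simp only [θ, FreeGroup.lift_apply_of, Function.update_self]
  rw [← zpow_mul, sg_mul, zpow_one]
  group

lemma agree {K : Type*} [Group K] (hP : ∀ p ∈ P, p.1 ≠ x) (hQ : ∀ p ∈ Q, p.1 ≠ x)
    {f g : FreeGroup X →* K} (h : ∀ y, y ≠ x → f (FreeGroup.of y) = g (FreeGroup.of y))
    (hS : f (FreeGroup.mk (P ++ (x, b) :: Q)) = g (FreeGroup.mk (P ++ (x, b) :: Q))) : f = g := by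
  ext y
  by_cases hy : y = x
  · subst hy
    rw [mk_split, map_mul, map_mul, map_mul, map_mul,
      hom_eq_on_FS (f := f) (g := g) (Y := {y}ᶜ) h (mk_mem_FS hP),
      hom_eq_on_FS (f := f) (g := g) (Y := {y}ᶜ) h (mk_mem_FS hQ), map_zpow, map_zpow] at hS
    exact sg_pow_inj b (mul_left_cancel (mul_right_cancel hS))
  · exact h y hy

variable {L S : List (X × Bool)} {n N : ℕ}

theorem baseF (hP : ∀ p ∈ P, p.1 ≠ x) (hQ : ∀ p ∈ Q, p.1 ≠ x) (hS : S = P ++ (x, b) :: Q)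
    (hL : FreeGroup.mk L ^ n = FreeGroup.mk S ^ N) :
    ∀ w ∈ FS ({x}ᶜ : Set X), pi L n w = 1 → w = 1 := by
  intro w hw h1
  obtain ⟨θ, h2, h3⟩ := solve (b := b) hP hQ FreeGroup.of 1
  rw [← hS] at h3
  have h4 : θ (FreeGroup.mk L) ^ n = 1 := by rw [← map_pow, hL, map_pow, h3, one_pow]
  have h5 := gpLift_pi L n θ h4 w
  rw [h1, map_one] at h5
  rw [hom_eq_on_FS (f := θ) (g := MonoidHom.id _) h2 hw] at h5
  exact h5.symm

set_option maxHeartbeats 1000000 in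
theorem baseM (hP : ∀ p ∈ P, p.1 ≠ x) (hQ : ∀ p ∈ Q, p.1 ≠ x) (hS : S = P ++ (x, b) :: Q)
    (hL : FreeGroup.mk L ^ n = FreeGroup.mk S ^ N) :
    (MS L n {x}ᶜ).IsMalnormal ∧ (Subgroup.zpowers (pi L n (FreeGroup.mk S))).IsMalnormal := by
  classical
  let c : X → GP L n := fun y => if y = x then pi L n (FreeGroup.mk S) else pi L n (FreeGroup.of y)
  have hcx : c x = pi L n (FreeGroup.mk S) := by simp [c]
  have hcy : ∀ y, y ≠ x → c y = pi L n (FreeGroup.of y) := fun y hy => by simp [c, hy]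
  have hcN : c x ^ N = 1 := by rw [hcx, ← map_pow, ← hL, map_pow, pi_rel]
  let C : X → Type _ := fun y => Subgroup.zpowers (c y)
  let gen : ∀ y, C y := fun y => ⟨c y, Subgroup.mem_zpowers _⟩
  obtain ⟨θ, h2, h3⟩ := solve (b := b) hP hQ (fun y => (CoprodI.of (gen y) : CoprodI C))
    (CoprodI.of (gen x))
  rw [← hS] at h3
  have h4 : θ (FreeGroup.mk L) ^ n = 1 := by
    have hLt : θ (FreeGroup.mk L ^ n) = θ (FreeGroup.mk S ^ N) := congrArg θ hL
    rw [← map_pow, hLt, map_pow, h3, ← map_pow]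
    have : gen x ^ N = 1 := Subtype.ext hcN
    rw [this, map_one]
  let io : GP L n →* CoprodI C := gpLift L n θ h4
  have hio : ∀ w, io (pi L n w) = θ w := gpLift_pi L n θ h4
  let rh : CoprodI C →* GP L n := CoprodI.lift fun y => (Subgroup.zpowers (c y)).subtype
  have hrg : ∀ y, rh (CoprodI.of (gen y)) = c y := fun y => by
    simp only [rh]
    erw [CoprodI.lift_of]
    rfl
  have hri : ∀ g, rh (io g) = g := by
    intro g
    obtain ⟨w, rfl⟩ := pi_surj L n g
    rw [hio]
    have : rh.comp θ = pi L n := by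
      subst hS
      refine agree hP hQ (b := b) ?_ ?_
      · intro y hy
        rw [MonoidHom.comp_apply, h2 y hy, hrg, hcy y hy]
      · rw [MonoidHom.comp_apply, h3, hrg, hcx]
    exact DFunLike.congr_fun this w
  have hinj : Function.Injective io := Function.LeftInverse.injective hri
  have hback : ∀ (J : Set X) (K : Subgroup (GP L n)), (∀ y ∈ J, c y ∈ K) →
      (csub (G := C) J).comap io ≤ K := by
    intro J K h g hg
    have : csub (G := C) J ≤ K.comap rh := by
      rw [csub, Subgroup.closure_le]
      rintro _ ⟨y, hy, ⟨_, k, rfl⟩, rfl⟩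
      have e1 : (⟨(fun z : ℤ => c y ^ z) k, ⟨k, rfl⟩⟩ : C y) = gen y ^ k := rfl
      rw [e1, SetLike.mem_coe, Subgroup.mem_comap, map_zpow, map_zpow, hrg]
      exact zpow_mem (h y hy) k
    have := this hg
    rwa [Subgroup.mem_comap, hri] at this
  constructor
  · have : MS L n {x}ᶜ = (csub (G := C) {x}ᶜ).comap io := by
      apply le_antisymm
      · rw [MS, Subgroup.map_le_iff_le_comap, FS, Subgroup.closure_le]
        rintro _ ⟨y, hy, rfl⟩
        rw [SetLike.mem_coe, Subgroup.mem_comap, Subgroup.mem_comap, hio]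
        rw [h2 y hy]
        exact of_mem_csub hy _
      · refine hback _ _ fun y hy => ?_
        rw [hcy y hy]
        exact pi_mem_MS (of_mem_FS hy)
    rw [this]
    exact malnormal_comap io hinj (csub_malnormal _)
  · have : Subgroup.zpowers (pi L n (FreeGroup.mk S)) = (csub (G := C) {x}).comap io := by
      apply le_antisymm
      · rw [Subgroup.zpowers_le]
        rw [Subgroup.mem_comap, hio]
        rw [h3]
        exact of_mem_csub (G := C) (Set.mem_singleton x) (gen x)
      · refine hback _ _ fun y hy => ?_
        rw [Set.mem_singleton_iff] at hy
        rw [hy, hcx]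
        exact Subgroup.mem_zpowers _
    rw [this]
    exact malnormal_comap io hinj (csub_malnormal _)

/-- separation lemma -/
lemma sep {D : Type*} [Group D] {d1 d2 : X → D} (h1 : ∀ y (k : ℤ), d1 y ^ k = 1 → k = 0)
    (h2 : ∀ y (k : ℤ), d2 y ^ k = 1 → k = 0) (h12 : ∀ k : ℤ, d1 x ^ k = d2 x ^ k → k = 0)
    {w : FreeGroup X}
    (he : FreeGroup.lift (fun y => (CoprodI.of (i := y) (d1 y) : CoprodI fun _ : X => D)) w =
      FreeGroup.lift (fun y => (CoprodI.of (i := y) (d2 y) : CoprodI fun _ : X => D)) w) :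
    w ∈ FS ({x}ᶜ : Set X) := by
  let ka : CoprodI (fun _ : X => Multiplicative ℤ) →* FreeGroup X :=
    CoprodI.lift fun y => zpowersHom _ (FreeGroup.of y)
  have hw : ∃ c, ka c = w := by
    refine ⟨FreeGroup.lift (fun y => CoprodI.of (i := y) (Multiplicative.ofAdd (1 : ℤ))) w, ?_⟩
    have : ka.comp (FreeGroup.lift (fun y => CoprodI.of (i := y) (Multiplicative.ofAdd (1 : ℤ)))) =
        MonoidHom.id _ := by
      ext y
      simp [ka]
    exact DFunLike.congr_fun this w
  obtain ⟨c, rfl⟩ := hw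
  obtain ⟨l, hl, rfl⟩ := exists_cgood c
  have hcomp : ∀ d : X → D, FreeGroup.lift
      (fun y => (CoprodI.of (i := y) (d y) : CoprodI fun _ : X => D)) (ka (cprod l)) =
      cprod (l.map fun p => (⟨p.1, d p.1 ^ (Multiplicative.toAdd p.2)⟩ : Σ _ : X, D)) := by
    intro d
    clear hl he
    induction l with
    | nil => simp
    | cons p l ih =>
      rw [cprod_cons, map_mul, map_mul, ih, List.map_cons, cprod_cons]
      congr 1
      simp [ka]
  have hgood : ∀ d : X → D, (∀ y (k : ℤ), d y ^ k = 1 → k = 0) →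
      CGood (l.map fun p => (⟨p.1, d p.1 ^ (Multiplicative.toAdd p.2)⟩ : Σ _ : X, D)) := by
    intro d hd
    refine ⟨fun p hp => ?_, ?_⟩
    · obtain ⟨q, hq, rfl⟩ := List.mem_map.1 hp
      intro h
      exact hl.1 q hq (hd _ _ h)
    · rw [List.isChain_map]
      exact hl.2
  rw [hcomp, hcomp] at he
  have heq := cgood_inj (hgood d1 h1) (hgood d2 h2) he
  rw [List.map_inj_left] at heq
  have hne : ∀ p ∈ l, p.1 ≠ x := by
    intro p hp hpx
    have h3 := heq p hp
    simp only [Sigma.mk.injEq, heq_eq_eq, true_and] at h3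
    rw [hpx] at h3
    exact hl.1 p hp (h12 _ h3)
  clear heq he hcomp hgood hl
  induction l with
  | nil => simp [one_mem]
  | cons p l ih =>
    rw [cprod_cons, map_mul]
    refine mul_mem ?_ (ih fun q hq => hne q (by simp [hq]))
    have : ka (CoprodI.of (i := p.1) p.2) = FreeGroup.of p.1 ^ (Multiplicative.toAdd p.2) := by simp [ka]
    rw [this]
    exact zpow_mem (of_mem_FS (hne p (by simp))) _

section perm
variable (N)
/-- translation -/
def uP : Equiv.Perm (ℤ × ZMod N) := Equiv.prodCongr (Equiv.addRight 1) (Equiv.refl _)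

/-- rotation of the zero fibre -/
def sP : Equiv.Perm (ℤ × ZMod N) where
  toFun p := (p.1, p.2 + if p.1 = 0 then 1 else 0)
  invFun p := (p.1, p.2 - if p.1 = 0 then 1 else 0)
  left_inv p := by simp
  right_inv p := by simp

lemma uP_inv_apply (p : ℤ × ZMod N) : (uP N)⁻¹ p = (p.1 - 1, p.2) := by
  rw [Equiv.Perm.inv_eq_iff_eq]
  simp [uP]

lemma sP_apply (p : ℤ × ZMod N) : sP N p = (p.1, p.2 + if p.1 = 0 then 1 else 0) := rfl

lemma sP_pow : sP N ^ N = 1 := by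
  have : ∀ (k : ℕ) (p : ℤ × ZMod N), (sP N ^ k) p = (p.1, p.2 + k * if p.1 = 0 then 1 else 0) := by
    intro k
    induction k with
    | zero => simp
    | succ k ih =>
      intro p
      rw [pow_succ', Equiv.Perm.mul_apply, ih, sP_apply]
      ext
      · rfl
      · simp only; push_cast; ring
  ext p
  · simp [this]
  · simp [this]

lemma perm_inf {d : Equiv.Perm (ℤ × ZMod N)} {c : ℤ} (hc : c ≠ 0) (hd : ∀ p, (d p).1 = p.1 + c)
    (k : ℤ) (h : d ^ k = 1) : k = 0 := by
  have hn : ∀ (k : ℕ) p, ((d ^ k) p).1 = p.1 + k * c := by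
    intro k
    induction k with
    | zero => simp
    | succ k ih =>
      intro p
      rw [pow_succ', Equiv.Perm.mul_apply, hd, ih]
      push_cast; ring
  have hpos : ∀ k : ℕ, d ^ k = 1 → k = 0 := by
    intro k hk
    have h1 := hn k (0, 0)
    rw [hk] at h1
    simp at h1
    tauto
  rcases Int.eq_nat_or_neg k with ⟨m, rfl | rfl⟩
  · rw [zpow_natCast] at h
    simp [hpos m h]
  · rw [zpow_neg, inv_eq_one, zpow_natCast] at h
    simp [hpos m h]

lemma su_sep (hN : 2 ≤ N) (k : ℤ) (h : (uP N)⁻¹ ^ k = (sP N * (uP N)⁻¹) ^ k) : k = 0 := by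
  have hs : ∀ j : ℕ, ((sP N * (uP N)⁻¹) ^ (j + 1)) (1, 0) = (-(j : ℤ), 1) := by
    intro j
    induction j with
    | zero =>
      rw [zero_add, pow_one, Equiv.Perm.mul_apply, uP_inv_apply, sP_apply]
      simp
    | succ j ih =>
      rw [pow_succ', Equiv.Perm.mul_apply, ih, Equiv.Perm.mul_apply, uP_inv_apply, sP_apply]
      have : -(j : ℤ) - 1 ≠ 0 := by omega
      simp only [this, if_false, add_zero]
      push_cast
      congr 1
      ring
  have hu : ∀ j : ℕ, ((((uP N)⁻¹) ^ j) (1, 0)).2 = 0 := by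
    intro j
    induction j with
    | zero => simp
    | succ j ih => rw [pow_succ', Equiv.Perm.mul_apply, uP_inv_apply, ih]
  have : Fact (1 < N) := ⟨hN⟩
  have hpos : ∀ j : ℕ, (uP N)⁻¹ ^ j = (sP N * (uP N)⁻¹) ^ j → j = 0 := by
    intro j hj
    cases j with
    | zero => rfl
    | succ j =>
      have h1 := hu (j + 1)
      rw [hj, hs] at h1
      simp at h1
  rcases Int.eq_nat_or_neg k with ⟨m, rfl | rfl⟩
  · rw [zpow_natCast, zpow_natCast] at h
    simp [hpos m h]
  · rw [zpow_neg, zpow_neg, inv_inj, zpow_natCast, zpow_natCast] at h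
    simp [hpos m h]
end perm

lemma grp_aux {K : Type*} [Group K] (p σ u a Z c : K)
    (h : p * (σ * u⁻¹) * (a * Z * c) = p * σ * p⁻¹) : Z = a⁻¹ * u * p⁻¹ * c⁻¹ := by
  have h1 : σ * (u⁻¹ * (a * Z * c)) = σ * p⁻¹ := by
    apply mul_left_cancel (a := p)
    simpa only [mul_assoc] using h
  have h2 := mul_left_cancel h1
  rw [← h2]
  group

theorem baseI {A B : List (X × Bool)} {z : X} {b' : Bool} (hxz : x ≠ z)
    (hP : ∀ p ∈ P, p.1 ≠ x ∧ p.1 ≠ z) (hA : ∀ p ∈ A, p.1 ≠ x ∧ p.1 ≠ z)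
    (hB : ∀ p ∈ B, p.1 ≠ x ∧ p.1 ≠ z)
    (hS : S = P ++ (x, b) :: (A ++ (z, b') :: B)) (hN : 2 ≤ N)
    (hL : FreeGroup.mk L ^ n = FreeGroup.mk S ^ N) :
    MS L n {x}ᶜ ⊓ MS L n {z}ᶜ ≤ MS L n {x, z}ᶜ := by
  classical
  let D := Equiv.Perm (ℤ × ZMod N)
  let K := CoprodI fun _ : X => D
  let u : D := uP N
  let d : D → X → D := fun σ y => if y = x then (σ * u⁻¹) ^ sg b else u
  let f : D → X → K := fun σ y => CoprodI.of (i := y) (d σ y)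
  let pp : K := FreeGroup.lift (f 1) (FreeGroup.mk P)
  have hS' : S = (P ++ (x, b) :: A) ++ (z, b') :: B := by rw [hS]; simp
  have hPA : ∀ p ∈ P ++ (x, b) :: A, p.1 ≠ z := by
    intro p hp
    rcases List.mem_append.1 hp with hp | hp
    · exact (hP p hp).2
    · rcases List.mem_cons.1 hp with rfl | hp
      · exact hxz
      · exact (hA p hp).2
  have hth : ∀ σ : D, ∃ θ : FreeGroup X →* K, (∀ y, y ≠ z → θ (FreeGroup.of y) = f σ y) ∧
      θ (FreeGroup.mk S) = pp * CoprodI.of (i := x) σ * pp⁻¹ := by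
    intro σ
    rw [hS']
    exact solve hPA (fun p hp => (hB p hp).2) _ _
  choose θ h1 h2 using hth
  have hdx : ∀ σ, d σ x = (σ * u⁻¹) ^ sg b := fun σ => by simp [d]
  have hdy : ∀ σ y, y ≠ x → d σ y = u := fun σ y hy => by simp [d, hy]
  have hag : ∀ σ, ∀ w ∈ FS ({x, z}ᶜ : Set X), θ σ w = FreeGroup.lift (f 1) w := by
    intro σ w hw
    refine hom_eq_on_FS (fun y hy => ?_) hw
    have hy' : y ≠ x ∧ y ≠ z := by simpa using hy
    rw [h1 σ y hy'.2, FreeGroup.lift_apply_of]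
    simp only [f]
    rw [hdy σ y hy'.1, hdy 1 y hy'.1]
  have hcomp : ∀ {l : List (X × Bool)}, (∀ p ∈ l, p.1 ≠ x ∧ p.1 ≠ z) →
      FreeGroup.mk l ∈ FS ({x, z}ᶜ : Set X) := fun h => mk_mem_FS fun p hp => by
    simpa using h p hp
  have hz : ∀ σ, θ σ (FreeGroup.of z) ^ sg b' =
      (FreeGroup.lift (f 1) (FreeGroup.mk A))⁻¹ * CoprodI.of (i := x) u * pp⁻¹ *
        (FreeGroup.lift (f 1) (FreeGroup.mk B))⁻¹ := by
    intro σ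
    have h3 := h2 σ
    rw [hS, mk_split, mk_split, map_mul, map_mul, map_mul, map_mul, hag σ _ (hcomp hP),
      hag σ _ (hcomp hA), hag σ _ (hcomp hB), map_zpow, map_zpow, h1 σ x hxz] at h3
    have h4 : f σ x ^ sg b = CoprodI.of (i := x) σ * (CoprodI.of (i := x) u)⁻¹ := by
      simp only [f]
      rw [hdx, ← map_zpow, ← zpow_mul, sg_mul, zpow_one, map_mul, map_inv]
    rw [h4] at h3
    exact grp_aux _ _ _ _ _ _ h3
  have hzz : ∀ σ, θ σ (FreeGroup.of z) = θ 1 (FreeGroup.of z) := fun σ =>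
    sg_pow_inj b' (by rw [hz, hz])
  have hrel : ∀ σ : D, σ ^ N = 1 → θ σ (FreeGroup.mk L) ^ n = 1 := by
    intro σ hσ
    rw [← map_pow, hL, map_pow, h2, conj_pow, ← map_pow, hσ, map_one]
    simp
  have hr1 := hrel 1 (one_pow _)
  have hr2 := hrel (sP N) (sP_pow N)
  rintro g ⟨⟨v, hv, hve⟩, ⟨w, hw, rfl⟩⟩
  have e1 : θ 1 w = θ 1 v := by
    have := congrArg (gpLift L n (θ 1) hr1) hve
    rw [gpLift_pi, gpLift_pi] at this
    exact this.symm
  have e2 : θ (sP N) w = θ (sP N) v := by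
    have := congrArg (gpLift L n (θ (sP N)) hr2) hve
    rw [gpLift_pi, gpLift_pi] at this
    exact this.symm
  have e3 : θ (sP N) v = θ 1 v := by
    refine hom_eq_on_FS (fun y hy => ?_) hv
    by_cases hyz : y = z
    · subst hyz; exact hzz _
    · rw [h1 _ y hyz, h1 _ y hyz]
      simp only [f]
      rw [hdy _ y hy, hdy _ y hy]
  have e4 : ∀ σ, θ σ w = FreeGroup.lift (f σ) w := fun σ =>
    hom_eq_on_FS (fun y hy => by rw [h1 σ y hy, FreeGroup.lift_apply_of]) hw
  have e5 : FreeGroup.lift (f 1) w = FreeGroup.lift (f (sP N)) w := by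
    rw [← e4, ← e4, e1, e2, e3]
  have hsg : ∀ k : ℤ, sg b * k = 0 → k = 0 := by
    intro k hk; cases b <;> simpa [sg] using hk
  have hinf : ∀ (σ : D), (∀ p, (σ p).1 = p.1) → ∀ y (k : ℤ), d σ y ^ k = 1 → k = 0 := by
    intro σ hσ y k hk
    by_cases hy : y = x
    · subst hy
      rw [hdx, ← zpow_mul] at hk
      refine hsg k (perm_inf N (c := -1) (by simp) (fun p => ?_) _ hk)
      rw [Equiv.Perm.mul_apply, hσ, uP_inv_apply]
      rfl
    · rw [hdy σ y hy] at hk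
      exact perm_inf N (c := 1) (by simp) (fun p => rfl) _ hk
  have hwx : w ∈ FS ({x}ᶜ : Set X) := by
    refine sep (hinf 1 fun p => rfl) (hinf (sP N) fun p => rfl) (fun k hk => ?_) e5
    rw [hdx, hdx, one_mul, ← zpow_mul, ← zpow_mul] at hk
    exact hsg k (su_sep N hN _ hk)
  refine pi_mem_MS ?_
  have : ({x, z}ᶜ : Set X) = {x}ᶜ ∩ {z}ᶜ := by ext y; simp
  rw [this, ← FS_inter]
  exact ⟨hwx, hw⟩

end Base
end OneRel
end Part8

section Part9
namespace OneRel
section Assembly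
variable {X : Type*}

lemma mem_lett_iff {L : List (X × Bool)} {x : X} : x ∈ lett L ↔ ∃ b, (x, b) ∈ L := Iff.rfl

lemma nodup_split {P Q : List (X × Bool)} {x : X} {b : Bool}
    (h : ((P ++ (x, b) :: Q).map Prod.fst).Nodup) :
    (∀ p ∈ P, p.1 ≠ x) ∧ (∀ p ∈ Q, p.1 ≠ x) := by
  rw [List.map_append, List.map_cons, List.nodup_append, List.nodup_cons] at h
  obtain ⟨_, ⟨h2, _⟩, h3⟩ := h
  constructor
  · intro p hp
    exact h3 p.1 (List.mem_map_of_mem hp) x (by simp)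
  · rintro p hp rfl
    exact h2 (List.mem_map.2 ⟨p, hp, rfl⟩)

theorem base {n k : ℕ} (hn : 2 ≤ n) (hk : 0 < k) {L S : List (X × Bool)}
    (hL : L = (List.replicate k S).flatten) (hS : (S.map Prod.fst).Nodup) : Magnus n L := by
  have hpow : FreeGroup.mk L ^ n = FreeGroup.mk S ^ (k * n) := by
    rw [pow_mul, FreeGroup.pow_mk k, ← hL]
  have hN : 2 ≤ k * n := le_trans hn (Nat.le_mul_of_pos_left n hk)
  have hsplit : ∀ x ∈ lett L, ∃ P b Q, S = P ++ (x, b) :: Q := by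
    rintro x ⟨b, hb⟩
    rw [hL, List.mem_flatten] at hb
    obtain ⟨l, hl, hb⟩ := hb
    rw [List.eq_of_mem_replicate hl] at hb
    obtain ⟨P, Q, h⟩ := List.append_of_mem hb
    exact ⟨P, b, Q, h⟩
  have key : ∀ {x z : X} {P A B : List (X × Bool)} {b b' : Bool},
      S = P ++ (x, b) :: (A ++ (z, b') :: B) →
      MS L n {x}ᶜ ⊓ MS L n {z}ᶜ ≤ MS L n {x, z}ᶜ := by
    intro x z P A B b b' h
    have h1 := nodup_split (h ▸ hS)
    have h' : S = (P ++ (x, b) :: A) ++ (z, b') :: B := by rw [h]; simp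
    have h2 := nodup_split (h' ▸ hS)
    refine baseI (fun e => h1.2 (z, b') (by simp) e.symm) (fun p hp => ⟨h1.1 p hp, h2.1 p (by simp [hp])⟩)
      (fun p hp => ⟨h1.2 p (by simp [hp]), h2.1 p (by simp [hp])⟩)
      (fun p hp => ⟨h1.2 p (by simp [hp]), h2.2 p hp⟩) h hN hpow
  refine ⟨fun x hx => ?_, fun x hx => ?_, fun x hx z hz hxz => ?_⟩
  · obtain ⟨P, b, Q, h⟩ := hsplit x hx
    have h1 := nodup_split (h ▸ hS)
    exact baseF h1.1 h1.2 h hpow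
  · obtain ⟨P, b, Q, h⟩ := hsplit x hx
    have h1 := nodup_split (h ▸ hS)
    exact (baseM h1.1 h1.2 h hpow).1
  · obtain ⟨P, b, Q, h⟩ := hsplit x hx
    obtain ⟨P', b', Q', h'⟩ := hsplit z hz
    have hm : (z, b') ∈ P ++ (x, b) :: Q := by rw [← h, h']; simp
    rcases List.mem_append.1 hm with hm | hm
    · obtain ⟨A, B, rfl⟩ := List.append_of_mem hm
      rw [inf_comm, Set.pair_comm]
      exact key (P := A) (A := B) (B := Q) (b := b') (b' := b) (by rw [h]; simp)
    · rcases List.mem_cons.1 hm with hm | hm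
      · simp only [Prod.mk.injEq] at hm
        exact absurd hm.1.symm hxz
      · obtain ⟨A, B, rfl⟩ := List.append_of_mem hm
        exact key h

theorem magnus_all {n : ℕ} (hn : 2 ≤ n) (d : ℕ) : ∀ {X : Type} (L : List (X × Bool)),
    FreeGroup.IsCyclicallyReduced L → L ≠ [] → L.length - (lett L).ncard = d → Magnus n L := by
  induction d using Nat.strong_induction_on with
  | _ d ih =>
    intro X L hL hne hd
    rcases dich_list hL hne with ⟨φ, h0, hlt⟩ | ⟨S, k, h, hS, -, hk⟩
    · refine step h0 (ih _ ?_ (lft φ 0 L) (lft_cyc φ 0 hL) ?_ rfl)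
      · have h1 := lett_ncard_le (lft φ 0 L)
        rw [lft_length] at h1 ⊢
        omega
      · intro h
        have := lft_length φ 0 L
        rw [h] at this
        exact hne (List.length_eq_zero_iff.1 this.symm)
    · exact base hn hk h hS

lemma single_letter {L : List (X × Bool)} {a : X} (h : ∀ p ∈ L, p.1 = a)
    (hr : FreeGroup.IsReduced L) : ∃ e, L = List.replicate L.length (a, e) := by
  induction L with
  | nil => exact ⟨true, rfl⟩
  | cons p L ih =>
    have hp := h p (by simp)
    obtain ⟨x, c⟩ := p
    obtain rfl : x = a := hp
    obtain ⟨e, he⟩ := ih (fun q hq => h q (by simp [hq])) (List.IsChain.tail hr)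
    cases L with
    | nil => exact ⟨c, rfl⟩
    | cons q L =>
      have hq : q = (x, e) := by
        rw [List.length_cons, List.replicate_succ] at he
        exact (List.cons.inj he).1
      have hc : c = e := by
        rw [FreeGroup.IsReduced, List.isChain_cons_cons] at hr
        have := hr.1
        rw [hq] at this
        exact this rfl
      refine ⟨e, ?_⟩
      rw [he, hc]
      simp [List.replicate_succ]

theorem gen_malnormal {X : Type} (a b : X) (hab : a ≠ b) (hX : ∀ x : X, x = a ∨ x = b) {n : ℕ}
    (hn : 2 ≤ n) (L : List (X × Bool)) (hL : FreeGroup.IsCyclicallyReduced L) (hne : L ≠ []) :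
    (Subgroup.zpowers (pi L n (FreeGroup.of a))).IsMalnormal := by
  by_cases hb : b ∈ lett L
  · have h := (magnus_all hn _ L hL hne rfl).M b hb
    have e : ({b}ᶜ : Set X) = {a} := by
      ext y
      rcases hX y with rfl | rfl
      · simp [hab]
      · simp [hab.symm]
    have e2 : MS L n {b}ᶜ = Subgroup.zpowers (pi L n (FreeGroup.of a)) := by
      rw [e, MS, FS, Set.image_singleton, ← Subgroup.zpowers_eq_closure, MonoidHom.map_zpowers]
    rwa [e2] at h
  · have hla : ∀ p ∈ L, p.1 = a := by
      rintro ⟨y, c⟩ hp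
      rcases hX y with h | h
      · exact h
      · subst h
        exact absurd ⟨c, hp⟩ hb
    obtain ⟨e, he⟩ := single_letter hla hL.isReduced
    have hpow : FreeGroup.mk L ^ n = FreeGroup.mk [(a, e)] ^ (L.length * n) := by
      rw [pow_mul, FreeGroup.pow_mk L.length]
      congr 2
      rw [List.flatten_replicate_singleton]
      exact he
    have h := (baseM (P := []) (Q := []) (x := a) (b := e) (by simp) (by simp) rfl hpow).2
    have e2 : Subgroup.zpowers (pi L n (FreeGroup.mk [(a, e)])) =
        Subgroup.zpowers (pi L n (FreeGroup.of a)) := by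
      cases e
      · have : FreeGroup.mk [(a, false)] = (FreeGroup.of a)⁻¹ := rfl
        rw [this, map_inv, Subgroup.zpowers_inv]
      · rfl
    rwa [← e2]

theorem main_aux {X : Type} (a b : X) (hab : a ≠ b) (hX : ∀ x : X, x = a ∨ x = b)
    (R : FreeGroup X) (n : ℕ) (hn : 2 ≤ n) (hR : R ≠ 1) :
    (Subgroup.zpowers (PresentedGroup.of (rels := {R ^ n}) a)).IsMalnormal := by
  classical
  obtain ⟨L, c, hL, he⟩ : ∃ (L : List (X × Bool)) (c : FreeGroup X),
      FreeGroup.IsCyclicallyReduced L ∧ R = c * FreeGroup.mk L * c⁻¹ := by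
    refine ⟨FreeGroup.reduceCyclically R.toWord,
      FreeGroup.mk (FreeGroup.reduceCyclically.conjugator R.toWord),
      FreeGroup.reduceCyclically.isCyclicallyReduced FreeGroup.isReduced_toWord, ?_⟩
    rw [FreeGroup.inv_mk, FreeGroup.mul_mk, FreeGroup.mul_mk,
      FreeGroup.reduceCyclically.conj_conjugator_reduceCyclically, FreeGroup.mk_toWord]
  have hne : L ≠ [] := by
    rintro rfl
    apply hR
    rw [he, ← FreeGroup.one_eq_mk]
    simp
  have h1 : pi L n R ^ n = 1 := by
    rw [he, map_mul, map_mul, map_inv, conj_pow, pi_rel]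
    simp
  let e1 : PresentedGroup ({R ^ n} : Set (FreeGroup X)) →* GP L n :=
    PresentedGroup.toGroup (f := fun y => pi L n (FreeGroup.of y)) (by
      intro r hr
      rw [Set.mem_singleton_iff] at hr
      have : FreeGroup.lift (fun y => pi L n (FreeGroup.of y)) = pi L n := by ext y; simp
      rw [this, hr, map_pow, h1])
  let q : FreeGroup X →* PresentedGroup ({R ^ n} : Set (FreeGroup X)) := PresentedGroup.mk _
  have hq : q R ^ n = 1 := by
    rw [← map_pow]
    exact PresentedGroup.one_of_mem (by simp)
  have h2 : q (FreeGroup.mk L) ^ n = 1 := by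
    have : FreeGroup.mk L = c⁻¹ * R * c⁻¹⁻¹ := by rw [he]; group
    rw [this, map_mul, map_mul, map_inv q c⁻¹, conj_pow, hq]
    simp
  let e2 := gpLift L n q h2
  have hinv : e2.comp e1 = MonoidHom.id _ := by
    ext y
    have : e1 (PresentedGroup.of y) = pi L n (FreeGroup.of y) := PresentedGroup.toGroup.of _
    rw [MonoidHom.comp_apply, this]
    rfl
  have hinj : Function.Injective e1 :=
    Function.LeftInverse.injective (g := e2) fun x => DFunLike.congr_fun hinv x
  have hm := malnormal_comap e1 hinj (gen_malnormal a b hab hX hn L hL hne)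
  have hea : e1 (PresentedGroup.of a) = pi L n (FreeGroup.of a) := PresentedGroup.toGroup.of _
  have heq : (Subgroup.zpowers (pi L n (FreeGroup.of a))).comap e1 =
      Subgroup.zpowers (PresentedGroup.of a) := by
    rw [← hea, ← MonoidHom.map_zpowers]
    exact Subgroup.comap_map_eq_self_of_injective hinj _
  rwa [heq] at hm

end Assembly
end OneRel
end Part9

/-- B. B. Newman.  In a two-generator one-relator group with torsion
`G = ⟨a, b; Rⁿ⟩`, the cyclic subgroups generated by the images of the two generators
are malnormal. -/
theorem statement_5 {X : Type} (a b : X) (hab : a ≠ b) (hX : ∀ x : X, x = a ∨ x = b)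
    (R : FreeGroup X) (n : ℕ) (hn : 1 < n)
    (hR : ∀ (S : FreeGroup X) (k : ℕ), 1 ≤ k → R = S ^ k → k = 1) :
    (Subgroup.zpowers (PresentedGroup.of (rels := {R ^ n}) a)).IsMalnormal ∧
      (Subgroup.zpowers (PresentedGroup.of (rels := {R ^ n}) b)).IsMalnormal := by
  have hR1 : R ≠ 1 := by
    intro h
    have := hR 1 2 (by norm_num) (by rw [h, one_pow])
    omega
  exact ⟨OneRel.main_aux a b hab hX R n hn hR1,
    OneRel.main_aux b a hab.symm (fun x => (hX x).symm) R n hn hR1⟩
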